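/- arXiv:2108.02367 — 3 statements merged into one kernel-verified Lean document; each statement's English description precedes it below -/
import Mathlib

section
/- Define γ₁ : [0,4] → ℝ² by γ₁(τ) = (1 − τ, 1) for τ ∈ [0,2] and γ₁(τ) = (−1, 3 − τ) for τ ∈ [2,4], and let γ₂(τ) be obtained from γ₁(τ) by swapping its two coordinates. Then γ₁ and γ₂ are unit-speed curves on C_∞ with respect to the ℓ_∞ norm, ‖γ₁(τ) − γ₂(τ)‖_∞ = τ for τ ∈ [0,2] and ‖γ₁(τ) − γ₂(τ)‖_∞ = 4 − τ for τ ∈ [2,4], and consequently max over τ ∈ [0,4] of (1 + τ + ‖γ₁(τ) − γ₂(τ)‖_∞) equals 5, the maximum being attained for every τ ∈ [2,4]. (This is the worst-case cost of the wireless evacuation algorithm Wireless-Search_∞(π/4) on the ℓ_∞ unit disk.) -/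
open Real MeasureTheory intervalIntegral

/-- The ℓ_∞ norm of a point of ℝ². -/
noncomputable def linfN (z : ℝ × ℝ) : ℝ := max |z.1| |z.2|

/-- The ℓ_∞ unit circle. -/
def Cinf : Set (ℝ × ℝ) := {z | linfN z = 1}

/-- Trajectory of robot #1 in Wireless-Search_∞(π/4). -/
noncomputable def gamma1 : ℝ → ℝ × ℝ := fun τ =>
  if τ ≤ 2 then (1 - τ, 1) else (-1, 3 - τ)

/-- Trajectory of robot #2: obtained from `gamma1` by swapping the two coordinates. -/
noncomputable def gamma2 : ℝ → ℝ × ℝ := fun τ => ((gamma1 τ).2, (gamma1 τ).1)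

/-! Reflection in the diagonal is an `ℓ_∞`-isometry exchanging `γ₁` and `γ₂`, so only `γ₁` has to be
studied, and the robots are at distance `|x - y|` when `γ₁ = (x, y)`. Along `γ₁` this is
`min τ (4 - τ)`: from `τ = 2` on, the distance shrinks as fast as the search time grows, so the cost
`1 + τ + min τ (4 - τ)` stays at `5`. -/

section Swap

variable {𝕜 E F : Type*} [NontriviallyNormedField 𝕜] [NormedAddCommGroup E] [NormedSpace 𝕜 E]
  [NormedAddCommGroup F] [NormedSpace 𝕜 F]

theorem deriv_prod_swap (f : 𝕜 → E × F) (t : 𝕜) :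
    deriv (fun s => (f s).swap) t = (deriv f t).swap :=
  congrArg (· 1) ((ContinuousLinearEquiv.prodComm 𝕜 E F).comp_fderiv (f := f) (x := t))

end Swap

theorem linfN_swap (z : ℝ × ℝ) : linfN z.swap = linfN z :=
  max_comm _ _

theorem linfN_sub_swap (z : ℝ × ℝ) : linfN (z - z.swap) = |z.2 - z.1| := by
  simp only [linfN, Prod.fst_sub, Prod.snd_sub, Prod.fst_swap, Prod.snd_swap,
    abs_sub_comm z.1, max_self]

theorem swap_mem_Cinf {z : ℝ × ℝ} : z.swap ∈ Cinf ↔ z ∈ Cinf :=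
  (linfN_swap z).congr_left

theorem mem_Cinf_of_abs_fst_eq_one {z : ℝ × ℝ} (h₁ : |z.1| = 1) (h₂ : |z.2| ≤ 1) : z ∈ Cinf :=
  (max_eq_left (h₂.trans_eq h₁.symm)).trans h₁

theorem mem_Cinf_of_abs_snd_eq_one {z : ℝ × ℝ} (h₁ : |z.1| ≤ 1) (h₂ : |z.2| = 1) : z ∈ Cinf :=
  swap_mem_Cinf.mp (mem_Cinf_of_abs_fst_eq_one h₂ h₁)

theorem gamma2_eq_swap (τ : ℝ) : gamma2 τ = (gamma1 τ).swap :=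
  rfl

theorem gamma1_of_le_two {τ : ℝ} (h : τ ≤ 2) : gamma1 τ = (1 - τ, 1) :=
  if_pos h

theorem gamma1_of_two_lt {τ : ℝ} (h : 2 < τ) : gamma1 τ = (-1, 3 - τ) :=
  if_neg h.not_ge

theorem gamma1_mem_Cinf {τ : ℝ} (hτ : τ ∈ Set.Icc 0 4) : gamma1 τ ∈ Cinf := by
  obtain ⟨h0, h4⟩ := hτ
  rcases le_or_gt τ 2 with h | h
  · rw [gamma1_of_le_two h]
    exact mem_Cinf_of_abs_snd_eq_one (abs_le.mpr ⟨by linarith, by linarith⟩) abs_one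
  · rw [gamma1_of_two_lt h]
    exact mem_Cinf_of_abs_fst_eq_one (by norm_num) (abs_le.mpr ⟨by linarith, by linarith⟩)

theorem gamma2_mem_Cinf {τ : ℝ} (hτ : τ ∈ Set.Icc 0 4) : gamma2 τ ∈ Cinf :=
  swap_mem_Cinf.mpr (gamma1_mem_Cinf hτ)

theorem hasDerivAt_gamma1_of_lt_two {τ : ℝ} (h : τ < 2) : HasDerivAt gamma1 (-1, 0) τ := by
  have affine : HasDerivAt (fun t : ℝ => (1 - t, (1 : ℝ))) (-1, 0) τ :=
    ((hasDerivAt_id τ).const_sub 1).prodMk (hasDerivAt_const τ 1)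
  refine affine.congr_of_eventuallyEq ?_
  filter_upwards [Iio_mem_nhds h] with t ht using gamma1_of_le_two ht.le

theorem hasDerivAt_gamma1_of_two_lt {τ : ℝ} (h : 2 < τ) : HasDerivAt gamma1 (0, -1) τ := by
  have affine : HasDerivAt (fun t : ℝ => ((-1 : ℝ), 3 - t)) (0, -1) τ :=
    (hasDerivAt_const τ (-1)).prodMk ((hasDerivAt_id τ).const_sub 3)
  refine affine.congr_of_eventuallyEq ?_
  filter_upwards [Ioi_mem_nhds h] with t ht using gamma1_of_two_lt ht

theorem linfN_deriv_gamma1 {τ : ℝ} (hτ : τ ≠ 2) : linfN (deriv gamma1 τ) = 1 := by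
  rcases hτ.lt_or_gt with h | h
  · simp [(hasDerivAt_gamma1_of_lt_two h).deriv, linfN]
  · simp [(hasDerivAt_gamma1_of_two_lt h).deriv, linfN]

theorem linfN_deriv_gamma2 {τ : ℝ} (hτ : τ ≠ 2) : linfN (deriv gamma2 τ) = 1 := calc
  linfN (deriv gamma2 τ) = linfN (deriv gamma1 τ).swap := congrArg linfN (deriv_prod_swap gamma1 τ)
  _ = linfN (deriv gamma1 τ) := linfN_swap _
  _ = 1 := linfN_deriv_gamma1 hτ

theorem gamma1_snd_sub_fst (τ : ℝ) : (gamma1 τ).2 - (gamma1 τ).1 = min τ (4 - τ) := by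
  rcases le_or_gt τ 2 with h | h
  · rw [gamma1_of_le_two h, min_eq_left (by linarith)]
    ring
  · rw [gamma1_of_two_lt h, min_eq_right (by linarith)]
    ring

theorem linfN_gamma1_sub_gamma2 {τ : ℝ} (hτ : τ ∈ Set.Icc 0 4) :
    linfN (gamma1 τ - gamma2 τ) = min τ (4 - τ) := by
  rw [gamma2_eq_swap, linfN_sub_swap, gamma1_snd_sub_fst,
    abs_of_nonneg (le_min hτ.1 (sub_nonneg.mpr hτ.2))]

theorem linfN_gamma1_sub_gamma2_of_le_two {τ : ℝ} (hτ : τ ∈ Set.Icc 0 2) :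
    linfN (gamma1 τ - gamma2 τ) = τ := by
  obtain ⟨h0, h2⟩ := hτ
  rw [linfN_gamma1_sub_gamma2 ⟨h0, by linarith⟩, min_eq_left (by linarith)]

theorem linfN_gamma1_sub_gamma2_of_two_le {τ : ℝ} (hτ : τ ∈ Set.Icc 2 4) :
    linfN (gamma1 τ - gamma2 τ) = 4 - τ := by
  obtain ⟨h2, h4⟩ := hτ
  rw [linfN_gamma1_sub_gamma2 ⟨by linarith, h4⟩, min_eq_right (by linarith)]

theorem evacuation_cost_le_five {τ : ℝ} (hτ : τ ∈ Set.Icc 0 4) :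
    1 + τ + linfN (gamma1 τ - gamma2 τ) ≤ 5 := by
  rw [linfN_gamma1_sub_gamma2 hτ]
  linarith [min_le_right τ (4 - τ)]

theorem evacuation_cost_eq_five {τ : ℝ} (hτ : τ ∈ Set.Icc 2 4) :
    1 + τ + linfN (gamma1 τ - gamma2 τ) = 5 := by
  rw [linfN_gamma1_sub_gamma2_of_two_le hτ]
  ring

/-- `γ₁` and `γ₂` are unit-speed curves on `C_∞` (w.r.t. ℓ_∞), their ℓ_∞ distance is `τ`
on `[0,2]` and `4 − τ` on `[2,4]`, and the worst-case evacuation cost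
`max_{τ ∈ [0,4]} (1 + τ + ‖γ₁(τ) − γ₂(τ)‖_∞)` equals `5`, attained for every `τ ∈ [2,4]`. -/
theorem stmt_4 :
    (∀ τ ∈ Set.Icc (0 : ℝ) 4, gamma1 τ ∈ Cinf ∧ gamma2 τ ∈ Cinf) ∧
    (∀ τ ∈ Set.Ioo (0 : ℝ) 2 ∪ Set.Ioo (2 : ℝ) 4,
      linfN (deriv gamma1 τ) = 1 ∧ linfN (deriv gamma2 τ) = 1) ∧
    (∀ τ ∈ Set.Icc (0 : ℝ) 2, linfN (gamma1 τ - gamma2 τ) = τ) ∧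
    (∀ τ ∈ Set.Icc (2 : ℝ) 4, linfN (gamma1 τ - gamma2 τ) = 4 - τ) ∧
    IsGreatest ((fun τ => 1 + τ + linfN (gamma1 τ - gamma2 τ)) '' Set.Icc (0 : ℝ) 4) 5 ∧
    (∀ τ ∈ Set.Icc (2 : ℝ) 4, 1 + τ + linfN (gamma1 τ - gamma2 τ) = 5) := by
  have ne_two : ∀ τ ∈ Set.Ioo (0 : ℝ) 2 ∪ Set.Ioo (2 : ℝ) 4, τ ≠ 2 := by
    rintro τ (hτ | hτ)
    exacts [hτ.2.ne, hτ.1.ne']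
  have greatest :
      IsGreatest ((fun τ => 1 + τ + linfN (gamma1 τ - gamma2 τ)) '' Set.Icc (0 : ℝ) 4) 5 :=
    ⟨⟨2, by norm_num, evacuation_cost_eq_five (by norm_num)⟩,
      Set.forall_mem_image.mpr fun _ => evacuation_cost_le_five⟩
  exact ⟨fun _ hτ => ⟨gamma1_mem_Cinf hτ, gamma2_mem_Cinf hτ⟩,
    fun τ hτ => ⟨linfN_deriv_gamma1 (ne_two τ hτ), linfN_deriv_gamma2 (ne_two τ hτ)⟩,
    fun _ => linfN_gamma1_sub_gamma2_of_le_two, fun _ => linfN_gamma1_sub_gamma2_of_two_le,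
    greatest, fun _ => evacuation_cost_eq_five⟩
end

section
/- For every real p > 1, the function L_p is increasing on [0, π_p]: whenever 0 ≤ u ≤ u′ ≤ π_p, one has L_p(u) ≤ L_p(u′). -/
open Real MeasureTheory intervalIntegral

/-- The ℓ_p norm of a point of ℝ². -/
noncomputable def lpN (p : ℝ) (z : ℝ × ℝ) : ℝ := (|z.1| ^ p + |z.2| ^ p) ^ (1 / p)

/-- The ℓ_p unit circle. -/
def Cp (p : ℝ) : Set (ℝ × ℝ) := {z | lpN p z = 1}

/-- The normalization factor `N_p(φ) = (|sin φ|^p + |cos φ|^p)^{1/p}`. -/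
noncomputable def Np (p φ : ℝ) : ℝ := (|Real.sin φ| ^ p + |Real.cos φ| ^ p) ^ (1 / p)

/-- The parameterization `ρ_p(φ) = (cos φ, sin φ)/N_p(φ)` of the ℓ_p unit circle. -/
noncomputable def rho (p φ : ℝ) : ℝ × ℝ := (Real.cos φ / Np p φ, Real.sin φ / Np p φ)

/-- The ℓ_p speed `‖ρ_p′(t)‖_p` of the parameterization `ρ_p`. -/
noncomputable def speed (p t : ℝ) : ℝ := lpN p (deriv (rho p) t)

/-- The ℓ_p arc-length measure of a subset `U` of the ℓ_p unit circle. -/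
noncomputable def muP (p : ℝ) (U : Set (ℝ × ℝ)) : ℝ :=
  ∫ t in {t : ℝ | t ∈ Set.Ico 0 (2 * Real.pi) ∧ rho p t ∈ U}, speed p t

/-- `π_p`, half the ℓ_p-circumference of the ℓ_p unit circle. -/
noncomputable def piP (p : ℝ) : ℝ := muP p (Cp p) / 2

/-- `L_p(u)`: the length of the shortest chord of `C_p` whose endpoints cut off a
counterclockwise arc of ℓ_p length `u`. -/
noncomputable def chordMin (p u : ℝ) : ℝ :=
  sInf {d : ℝ | ∃ a b : ℝ, a ≤ b ∧ b ≤ a + 2 * Real.pi ∧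
    (∫ t in a..b, speed p t) = u ∧ d = lpN p (rho p a - rho p b)}

/-!
In a convex quadrilateral the diagonals together are at least as long as two opposite sides
together. For points `x`, `y`, `z` in counterclockwise order on a half circle around `0`, the
quadrilateral `0 x y z` gives `‖x - y‖ + ‖z‖ ≤ ‖x - z‖ + ‖y‖`, and as `‖y‖ = ‖z‖` the chord from `x`
grows with its other endpoint. An arc of length `u' ≤ π_p` lies in such a half circle, since the
central symmetry of the circle makes every half circle have length `π_p`. Cutting the arc down to
length `u` from its starting point therefore does not lengthen its chord.
-/

section Quadrilateral

variable {E : Type*} [SeminormedAddCommGroup E] [NormedSpace ℝ E] {o w x y z : E} {α β γ : ℝ}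

theorem dist_add_dist_le_of_mem_segment (hxz : w ∈ segment ℝ x z) (hoy : w ∈ segment ℝ o y) :
    dist x y + dist o z ≤ dist x z + dist o y := by
  linarith [dist_triangle x w y, dist_triangle o w z, dist_add_dist_of_mem_segment hxz,
    dist_add_dist_of_mem_segment hoy]

theorem norm_sub_le_norm_sub_of_smul_eq_add (hα : 0 ≤ α) (hβ : 0 ≤ β) (hαβ : 0 < α + β)
    (hγ : 0 ≤ γ) (h : γ • y = α • x + β • z) (hxy : ‖x‖ ≤ ‖y‖) (hyz : ‖y‖ = ‖z‖) :
    ‖x - y‖ ≤ ‖x - z‖ := by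
  rcases (norm_nonneg y).eq_or_lt with hy | hy
  · linarith [norm_sub_le x y, norm_nonneg (x - z)]
  have hγ_le : γ ≤ α + β := by
    refine le_of_mul_le_mul_right ?_ hy
    calc γ * ‖y‖ = ‖α • x + β • z‖ := by rw [← h, norm_smul_of_nonneg hγ]
      _ ≤ α * ‖x‖ + β * ‖z‖ := by
        rw [← norm_smul_of_nonneg hα, ← norm_smul_of_nonneg hβ]
        exact norm_add_le _ _
      _ ≤ (α + β) * ‖y‖ := by rw [← hyz, add_mul]; gcongr
  -- `(γ / (α + β)) • y` is the point where the diagonals of `0 x y z` meet.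
  have hxz : (γ / (α + β)) • y ∈ segment ℝ x z :=
    ⟨α / (α + β), β / (α + β), by positivity, by positivity, by field_simp, by
      simp only [div_eq_inv_mul, mul_smul, h, smul_add]⟩
  have hoy : (γ / (α + β)) • y ∈ segment ℝ 0 y :=
    ⟨1 - γ / (α + β), γ / (α + β), by linarith [(div_le_one hαβ).2 hγ_le], by positivity,
      by ring, by simp⟩
  have := dist_add_dist_le_of_mem_segment hxz hoy
  simp only [dist_eq_norm, zero_sub, norm_neg] at this
  linarith

end Quadrilateral

section Primitive

variable {f : ℝ → ℝ} {a c u : ℝ}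

theorem exists_intervalIntegral_eq (hf : IntervalIntegrable f volume a c) (hac : a ≤ c)
    (hu : u ∈ Set.Icc 0 (∫ t in a..c, f t)) : ∃ b ∈ Set.Icc a c, ∫ t in a..b, f t = u := by
  have hcont : ContinuousOn (fun b ↦ ∫ t in a..b, f t) (Set.Icc a c) := by
    simpa only [Set.uIcc_of_le hac] using continuousOn_primitive_interval' hf Set.left_mem_uIcc
  exact intermediate_value_Icc hac hcont (by simpa only [integral_same] using hu)

theorem strictMono_intervalIntegral (hf : ∀ b c, IntervalIntegrable f volume b c)
    (hpos : ∀ t, 0 < f t) (a : ℝ) : StrictMono fun b ↦ ∫ t in a..b, f t := fun b c hbc ↦ by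
  rw [← sub_pos, integral_interval_sub_left (hf a c) (hf a b)]
  exact intervalIntegral_pos_of_pos (hf b c) hpos hbc

end Primitive

variable {p : ℝ}

section Norm

variable {z : ℝ × ℝ}

theorem lpN_eq_norm_toLp (hp : 0 < p) (z : ℝ × ℝ) :
    lpN p z = ‖WithLp.toLp (ENNReal.ofReal p) z‖ := by
  have hp' : (ENNReal.ofReal p).toReal = p := ENNReal.toReal_ofReal hp.le
  rw [WithLp.prod_norm_eq_add (by rwa [hp']), hp']
  rfl

theorem lpN_nonneg (p : ℝ) (z : ℝ × ℝ) : 0 ≤ lpN p z := by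
  unfold lpN; positivity

theorem lpN_zero (hp : p ≠ 0) : lpN p 0 = 0 := by
  simp [lpN, hp]

theorem lpN_neg (p : ℝ) (z : ℝ × ℝ) : lpN p (-z) = lpN p z := by
  simp [lpN]

theorem abs_rpow_add_abs_rpow_pos (p : ℝ) (hz : z ≠ 0) : 0 < |z.1| ^ p + |z.2| ^ p := by
  have : z.1 ≠ 0 ∨ z.2 ≠ 0 := by
    contrapose! hz
    exact Prod.ext hz.1 hz.2
  rcases this with h | h <;> positivity

theorem lpN_pos (p : ℝ) (hz : z ≠ 0) : 0 < lpN p z :=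
  rpow_pos_of_pos (abs_rpow_add_abs_rpow_pos p hz) _

theorem lpN_smul (hp : p ≠ 0) (c : ℝ) (z : ℝ × ℝ) : lpN p (c • z) = |c| * lpN p z := by
  simp only [lpN, Prod.smul_fst, Prod.smul_snd, smul_eq_mul, abs_mul,
    mul_rpow (abs_nonneg c) (abs_nonneg _), ← mul_add]
  rw [mul_rpow (by positivity) (by positivity), ← rpow_mul (abs_nonneg c),
    mul_one_div_cancel hp, rpow_one]

theorem continuous_lpN (hp : 0 ≤ p) : Continuous (lpN p) :=
  ((continuous_fst.abs.rpow_const fun _ ↦ .inr hp).add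
    (continuous_snd.abs.rpow_const fun _ ↦ .inr hp)).rpow_const fun _ ↦ .inr (by positivity)

theorem contDiffAt_lpN (hp : 1 < p) (hz : z ≠ 0) : ContDiffAt ℝ 1 (lpN p) z := by
  have hpow : ContDiff ℝ 1 fun x : ℝ ↦ |x| ^ p := contDiff_norm_rpow hp
  exact ((hpow.comp contDiff_fst).add (hpow.comp contDiff_snd)).contDiffAt.rpow_const_of_ne
    (abs_rpow_add_abs_rpow_pos p hz).ne'

theorem lpN_sub_le_lpN_sub_of_smul_eq_add {x y z : ℝ × ℝ} {α β γ : ℝ} (hp : 1 ≤ p) (hα : 0 ≤ α)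
    (hβ : 0 ≤ β) (hαβ : 0 < α + β) (hγ : 0 ≤ γ) (h : γ • y = α • x + β • z)
    (hxy : lpN p x ≤ lpN p y) (hyz : lpN p y = lpN p z) :
    lpN p (x - y) ≤ lpN p (x - z) := by
  have : Fact (1 ≤ ENNReal.ofReal p) := ⟨by simpa using hp⟩
  simp only [lpN_eq_norm_toLp (zero_lt_one.trans_le hp), WithLp.toLp_sub] at hxy hyz ⊢
  refine norm_sub_le_norm_sub_of_smul_eq_add hα hβ hαβ hγ ?_ hxy hyz
  simpa only [WithLp.toLp_add, WithLp.toLp_smul] using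
    congrArg (WithLp.toLp (ENNReal.ofReal p)) h

end Norm

section Parameterization

theorem cos_sin_ne_zero (t : ℝ) : (cos t, sin t) ≠ 0 := fun h ↦ by
  simp only [Prod.mk_eq_zero] at h
  simpa [h.1, h.2] using sin_sq_add_cos_sq t

theorem Np_eq_lpN (p t : ℝ) : Np p t = lpN p (cos t, sin t) := by
  simp only [Np, lpN, add_comm]

theorem Np_pos (p t : ℝ) : 0 < Np p t :=
  Np_eq_lpN p t ▸ lpN_pos p (cos_sin_ne_zero t)

theorem Np_smul_rho (p t : ℝ) : Np p t • rho p t = (cos t, sin t) := by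
  simp [rho, mul_div_cancel₀ _ (Np_pos p t).ne']

theorem lpN_rho (hp : p ≠ 0) (t : ℝ) : lpN p (rho p t) = 1 := by
  have h := lpN_smul hp (Np p t) (rho p t)
  rw [Np_smul_rho, ← Np_eq_lpN, abs_of_pos (Np_pos p t)] at h
  exact (left_eq_mul₀ (Np_pos p t).ne').1 h

theorem rho_add_pi (p t : ℝ) : rho p (t + π) = -rho p t := by
  ext <;> simp [rho, Np, neg_div]

theorem sin_mul_Np_smul_rho (p a b c : ℝ) :
    (sin (c - a) * Np p b) • rho p b =
      (sin (c - b) * Np p a) • rho p a + (sin (b - a) * Np p c) • rho p c := by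
  simp only [mul_smul, Np_smul_rho, sin_sub]
  ext <;> simp <;> ring

theorem monotoneOn_lpN_rho_sub_rho (hp : 1 ≤ p) (a : ℝ) :
    MonotoneOn (fun b ↦ lpN p (rho p a - rho p b)) (Set.Icc a (a + π)) := by
  rintro b ⟨hab, -⟩ c ⟨-, hca⟩ hbc
  have hp₀ : p ≠ 0 := by positivity
  rcases hab.eq_or_lt with rfl | hab
  · simpa only [sub_self, lpN_zero hp₀] using lpN_nonneg p (rho p a - rho p c)
  rcases hbc.eq_or_lt with rfl | hbc
  · exact le_rfl
  have hsin_cb : 0 < sin (c - b) := sin_pos_of_pos_of_lt_pi (by linarith) (by linarith)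
  have hsin_ba : 0 < sin (b - a) := sin_pos_of_pos_of_lt_pi (by linarith) (by linarith)
  have hsin_ca : 0 ≤ sin (c - a) := sin_nonneg_of_nonneg_of_le_pi (by linarith) (by linarith)
  have hNa := Np_pos p a
  have hNb := Np_pos p b
  have hNc := Np_pos p c
  exact lpN_sub_le_lpN_sub_of_smul_eq_add hp (by positivity) (by positivity) (by positivity)
    (by positivity) (sin_mul_Np_smul_rho p a b c) (by simp only [lpN_rho hp₀, le_refl])
    (by simp only [lpN_rho hp₀])

theorem contDiff_Np (hp : 1 < p) : ContDiff ℝ 1 (Np p) := by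
  rw [funext (Np_eq_lpN p), contDiff_iff_contDiffAt]
  exact fun t ↦ (contDiffAt_lpN hp (cos_sin_ne_zero t)).comp t
    (contDiff_cos.prodMk contDiff_sin).contDiffAt

theorem contDiff_rho (hp : 1 < p) : ContDiff ℝ 1 (rho p) :=
  have hN (t : ℝ) : Np p t ≠ 0 := (Np_pos p t).ne'
  (contDiff_cos.div (contDiff_Np hp) hN).prodMk (contDiff_sin.div (contDiff_Np hp) hN)

theorem deriv_rho_ne_zero (hp : 1 < p) (t : ℝ) : deriv (rho p) t ≠ 0 := fun h ↦ by
  have hN := ((contDiff_Np hp).differentiable one_ne_zero t).hasDerivAt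
  have hrho := ((contDiff_rho hp).differentiable one_ne_zero t).hasDerivAt
  have hsmul : HasDerivAt (fun t ↦ (cos t, sin t)) (deriv (Np p) t • rho p t) t := by
    simpa only [h, smul_zero, zero_add, funext (Np_smul_rho p)] using hN.fun_smul hrho
  have heq := hsmul.unique ((hasDerivAt_cos t).prodMk (hasDerivAt_sin t))
  simp only [rho, Prod.smul_mk, smul_eq_mul, Prod.mk.injEq] at heq
  have : sin t ^ 2 + cos t ^ 2 = 0 := by
    linear_combination sin t * heq.1 - cos t * heq.2
  linarith [sin_sq_add_cos_sq t]

end Parameterization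

section ArcLength

theorem speed_pos (hp : 1 < p) (t : ℝ) : 0 < speed p t :=
  lpN_pos p (deriv_rho_ne_zero hp t)

theorem continuous_speed (hp : 1 < p) : Continuous (speed p) :=
  (continuous_lpN (by linarith)).comp ((contDiff_rho hp).continuous_deriv le_rfl)

theorem intervalIntegrable_speed (hp : 1 < p) (a b : ℝ) :
    IntervalIntegrable (speed p) volume a b :=
  (continuous_speed hp).intervalIntegrable a b

theorem speed_periodic (p : ℝ) : Function.Periodic (speed p) π := fun t ↦ by
  rw [speed, ← deriv_comp_add_const, funext (rho_add_pi p), deriv.fun_neg, lpN_neg, speed]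

theorem muP_Cp (hp : p ≠ 0) : muP p (Cp p) = ∫ t in 0..2 * π, speed p t := by
  have hset : {t | t ∈ Set.Ico 0 (2 * π) ∧ rho p t ∈ Cp p} = Set.Ico 0 (2 * π) := by
    simp only [Cp, Set.mem_ofPred_eq, lpN_rho hp, and_true, Set.ofPred_mem_eq]
  rw [muP, hset, integral_of_le two_pi_pos.le, integral_Ico_eq_integral_Ioc]

theorem integral_speed_add_pi (hp : 1 < p) (a : ℝ) : ∫ t in a..a + π, speed p t = piP p := by
  have htwo := (speed_periodic p).intervalIntegral_add_zsmul_eq 2 0 (intervalIntegrable_speed hp)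
  simp only [zsmul_eq_mul, Int.cast_ofNat, zero_add] at htwo
  rw [(speed_periodic p).intervalIntegral_add_eq a 0, zero_add, piP, muP_Cp (by positivity), htwo]
  ring

end ArcLength

theorem chordMin_le {a b u : ℝ} (hab : a ≤ b) (hb : b ≤ a + 2 * π)
    (hu : ∫ t in a..b, speed p t = u) : chordMin p u ≤ lpN p (rho p a - rho p b) :=
  csInf_le ⟨0, by rintro _ ⟨_, _, _, _, _, rfl⟩; exact lpN_nonneg _ _⟩ ⟨a, b, hab, hb, hu, rfl⟩

/-- For every `p > 1`, the function `L_p` is increasing on `[0, π_p]`. -/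
theorem stmt_12 (p : ℝ) (hp : 1 < p) :
    ∀ u u' : ℝ, 0 ≤ u → u ≤ u' → u' ≤ piP p → chordMin p u ≤ chordMin p u' := by
  intro u u' hu huu' hu'
  have hint := intervalIntegrable_speed hp
  have hhalf := integral_speed_add_pi hp
  refine le_csInf ?_ ?_
  · obtain ⟨b, ⟨h0b, hbπ⟩, hb⟩ := exists_intervalIntegral_eq (hint 0 (0 + π))
      (by linarith [pi_pos]) ⟨hu.trans huu', hu'.trans_eq (hhalf 0).symm⟩
    exact ⟨_, 0, b, h0b, by linarith [pi_pos], hb, rfl⟩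
  · rintro _ ⟨a, c, hac, hc, hu'c, rfl⟩
    have hcπ : c ≤ a + π :=
      (strictMono_intervalIntegral hint (speed_pos hp) a).le_iff_le.1 (by rwa [hu'c, hhalf])
    obtain ⟨b, ⟨hab, hbc⟩, hub⟩ :=
      exists_intervalIntegral_eq (hint a c) hac ⟨hu, huu'.trans_eq hu'c.symm⟩
    calc chordMin p u ≤ lpN p (rho p a - rho p b) := chordMin_le hab (hbc.trans hc) hub
      _ ≤ lpN p (rho p a - rho p c) :=
        monotoneOn_lpN_rho_sub_rho hp.le a ⟨hab, hbc.trans hcπ⟩ ⟨hac, hcπ⟩ hbc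
end

section
/- For every real p > 1, L_p(e_p) = γ_p: among all pairs of points of C_p whose joining arc has μ_p-length e_p, the minimum possible ℓ_p chord length equals γ_p. Equivalently, the shortest chord subtending an arc of length e_p is attained by an arc symmetric about the x-axis when p ∈ (1,2], and by an arc symmetric about the line y = x when p ∈ [2,∞). -/
open Real MeasureTheory intervalIntegral

/-!
Slide an arc of half-length `h` along the unit circle, with midpoint parameter `μ` and chord `v`.
Up to a positive factor the derivative in `μ` of `‖v‖_p` is the difference of
`powCross p (p - 1) v z` at the two endpoints `z`. For the exponent `1` in place of `p - 1` both
values equal the determinant of the endpoints. Whenever they agree at some exponent `r > 0`, their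
`r`-derivatives are strictly ordered, always the same way, so as functions of `r` they cross only
at `1`, and the sign at `p - 1` is that of `p - 2`. Hence the chord length is monotone in `μ` from
the diagonal to the axis of symmetry, and its minimum is at the axis for `p ≤ 2` and at the diagonal
for `2 ≤ p`, where the chord is explicit.

In logarithmic coordinates `log (powCross p r v z)` is, up to terms common to both endpoints,
`f (r * s + r * κ) - logCosh (p * (r * s)) / p` with `f = logCosh` or `f = logSinh`, according to
the quadrant of `z`. Applying `r * d/dr - 1` replaces each of these functions `f` by its Legendre
companion `x * f' - f`, so two such expressions with equal values have to be compared through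
their companions. Equality of the values allows a multiple of `f` to be subtracted from the
companion, and the multiple is chosen to put the peak of the tilted companion where it helps.
-/

namespace LpCircle

theorem le_of_hasDerivAt_nonneg_off_countable {f f' : ℝ → ℝ} {a b : ℝ} {F : Set ℝ}
    (hab : a ≤ b) (hF : F.Countable) (hcont : ContinuousOn f (Set.Icc a b))
    (hderiv : ∀ x ∈ Set.Ioo a b, HasDerivAt f (f' x) x)
    (hnonneg : ∀ x ∈ Set.Ioo a b, x ∉ F → 0 ≤ f' x) : f a ≤ f b := by
  have hzero : F.indicator f' =ᵐ[volume] 0 := indicator_meas_zero (hF.measure_zero volume)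
  have hle : ∀ x ∈ Set.Ioo a b, F.indicator f' x ≤ f' x := fun x hx => by
    by_cases hxF : x ∈ F
    · rw [Set.indicator_of_mem hxF]
    · rw [Set.indicator_of_notMem hxF]
      exact hnonneg x hx hxF
  have hintegral := integral_le_sub_of_hasDeriv_right_of_le hab hcont
    (fun x hx => (hderiv x hx).hasDerivWithinAt)
    ((integrable_zero ℝ ℝ volume).congr hzero.symm).integrableOn hle
  rw [integral_congr_ae (hzero.mono fun x hx _ => hx)] at hintegral
  simpa using hintegral

/-- The graph of `f` crosses that of `g` from below at `1`; only positive arguments matter. -/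
def CrossesUpAtOne (f g : ℝ → ℝ) : Prop :=
  (∀ r, 0 < r → r ≤ 1 → f r ≤ g r) ∧ ∀ r, 1 ≤ r → g r ≤ f r

theorem crossesUpAtOne_of_hasDerivAt {f g f' g' : ℝ → ℝ}
    (hf : ∀ r, 0 < r → HasDerivAt f (f' r) r) (hg : ∀ r, 0 < r → HasDerivAt g (g' r) r)
    (hfg : f 1 = g 1) (h : ∀ r, 0 < r → f r = g r → g' r < f' r) : CrossesUpAtOne f g := by
  have reflect {k k' : ℝ → ℝ} (hk : ∀ r, 0 < r → HasDerivAt k (k' r) r) (x : ℝ) (hx : x < 0) :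
      HasDerivAt (fun y => k (-y)) (-k' (-x)) x :=
    ((hk (-x) (neg_pos.2 hx)).comp x (hasDerivAt_neg x)).congr_deriv (mul_neg_one _)
  refine ⟨fun r hr0 hr1 => ?_, fun r hr => ?_⟩
  · have hle := image_le_of_deriv_right_lt_deriv_boundary' (a := -1) (b := -r)
      (fun x hx => (reflect hf x (by linarith [hx.2])).continuousAt.continuousWithinAt)
      (fun x hx => (reflect hf x (by linarith [hx.2])).hasDerivWithinAt) (by simpa using hfg.le)
      (fun x hx => (reflect hg x (by linarith [hx.2])).continuousAt.continuousWithinAt)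
      (fun x hx => (reflect hg x (by linarith [hx.2])).hasDerivWithinAt)
      (fun x hx hx' => neg_lt_neg (h (-x) (by linarith [hx.2]) hx'))
    simpa using hle (x := -r) ⟨by linarith, le_rfl⟩
  · exact image_le_of_deriv_right_lt_deriv_boundary'
      (fun x hx => (hg x (by linarith [hx.1])).continuousAt.continuousWithinAt)
      (fun x hx => (hg x (by linarith [hx.1])).hasDerivWithinAt) hfg.ge
      (fun x hx => (hf x (by linarith [hx.1])).continuousAt.continuousWithinAt)
      (fun x hx => (hf x (by linarith [hx.1])).hasDerivWithinAt)
      (fun x hx hx' => h x (by linarith [hx.1]) hx'.symm) ⟨hr, le_rfl⟩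

/-! ### The log-hyperbolic functions -/

theorem tanh_strictMono : StrictMono tanh := fun x y hxy => by
  rwa [← artanh_lt_artanh_iff ⟨neg_one_lt_tanh x, tanh_lt_one x⟩ ⟨neg_one_lt_tanh y, tanh_lt_one y⟩,
    artanh_tanh, artanh_tanh]

theorem tanh_pos {x : ℝ} (hx : 0 < x) : 0 < tanh x := tanh_zero ▸ tanh_strictMono hx

theorem one_sub_tanh_sq (x : ℝ) : 1 - tanh x ^ 2 = 1 / cosh x ^ 2 := by
  rw [tanh_eq_sinh_div_cosh, div_pow, one_sub_div (pow_pos (cosh_pos x) 2).ne',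
    cosh_sq_sub_sinh_sq]

theorem one_sub_tanh_sq_pos (x : ℝ) : 0 < 1 - tanh x ^ 2 := sub_pos.2 (tanh_sq_lt_one x)

theorem hasDerivAt_tanh (x : ℝ) : HasDerivAt tanh (1 - tanh x ^ 2) x := by
  have hquot := (hasDerivAt_sinh x).div (hasDerivAt_cosh x) (cosh_pos x).ne'
  refine (hquot.congr_deriv ?_).congr_of_eventuallyEq (.of_forall tanh_eq_sinh_div_cosh)
  rw [one_sub_tanh_sq, ← cosh_sq_sub_sinh_sq x]
  ring

theorem mul_tanh_lt_mul_tanh {x y : ℝ} (hx : 0 ≤ x) (hxy : x < y) : x * tanh x < y * tanh y :=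
  mul_lt_mul'' hxy (tanh_strictMono hxy) hx (tanh_zero ▸ tanh_strictMono.monotone hx)

/-- The logarithm of the hyperbolic cosine. -/
noncomputable def logCosh (x : ℝ) : ℝ := log (cosh x)

/-- The logarithm of the hyperbolic sine, meaningful for positive arguments only. -/
noncomputable def logSinh (x : ℝ) : ℝ := log (sinh x)

/-- The Legendre-type companion `x f' - f` of `f = logCosh`. -/
noncomputable def legCosh (x : ℝ) : ℝ := x * tanh x - logCosh x

/-- The Legendre-type companion `x f' - f` of `f = logSinh`. -/
noncomputable def legSinh (x : ℝ) : ℝ := x * (cosh x / sinh x) - logSinh x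

theorem hasDerivAt_logCosh (x : ℝ) : HasDerivAt logCosh (tanh x) x := by
  rw [tanh_eq_sinh_div_cosh]
  exact (hasDerivAt_cosh x).log (cosh_pos x).ne'

theorem hasDerivAt_logSinh {x : ℝ} (hx : 0 < x) : HasDerivAt logSinh (cosh x / sinh x) x :=
  (hasDerivAt_sinh x).log (sinh_pos_iff.2 hx).ne'

theorem hasDerivAt_legCosh (x : ℝ) : HasDerivAt legCosh (x * (1 - tanh x ^ 2)) x :=
  (((hasDerivAt_id x).mul (hasDerivAt_tanh x)).sub (hasDerivAt_logCosh x)).congr_deriv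
    (by simp only [id]; ring)

theorem hasDerivAt_legSinh {x : ℝ} (hx : 0 < x) : HasDerivAt legSinh (-(x / sinh x ^ 2)) x := by
  have hsinh := (sinh_pos_iff.2 hx).ne'
  refine (((hasDerivAt_id x).mul ((hasDerivAt_cosh x).div (hasDerivAt_sinh x) hsinh)).sub
    (hasDerivAt_logSinh hx)).congr_deriv ?_
  simp only [id, Pi.div_apply]
  field_simp
  rw [cosh_sq]
  ring

theorem logCosh_neg (x : ℝ) : logCosh (-x) = logCosh x := by rw [logCosh, cosh_neg, logCosh]

theorem legCosh_neg (x : ℝ) : legCosh (-x) = legCosh x := by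
  rw [legCosh, tanh_neg, neg_mul_neg, logCosh_neg, legCosh]

theorem logCosh_strictMonoOn : StrictMonoOn logCosh (Set.Ici 0) := by
  refine strictMonoOn_of_deriv_pos (convex_Ici 0)
    (fun x _ => (hasDerivAt_logCosh x).continuousAt.continuousWithinAt) fun x hx => ?_
  rw [interior_Ici] at hx
  rw [(hasDerivAt_logCosh x).deriv]
  exact tanh_pos hx

theorem legCosh_strictMonoOn : StrictMonoOn legCosh (Set.Ici 0) := by
  refine strictMonoOn_of_deriv_pos (convex_Ici 0)
    (fun x _ => (hasDerivAt_legCosh x).continuousAt.continuousWithinAt) fun x hx => ?_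
  rw [interior_Ici] at hx
  rw [(hasDerivAt_legCosh x).deriv]
  exact mul_pos hx (one_sub_tanh_sq_pos x)

theorem apply_abs_of_even {f : ℝ → ℝ} (hf : Function.Even f) (x : ℝ) : f |x| = f x := by
  rcases abs_choice x with h | h <;> simp only [h, hf x]

theorem logCosh_lt_logCosh {x y : ℝ} (h : |x| < |y|) : logCosh x < logCosh y := by
  rw [← apply_abs_of_even logCosh_neg x, ← apply_abs_of_even logCosh_neg y]
  exact logCosh_strictMonoOn (abs_nonneg x) (abs_nonneg y) h

theorem legCosh_lt_legCosh {x y : ℝ} (h : |x| < |y|) : legCosh x < legCosh y := by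
  rw [← apply_abs_of_even legCosh_neg x, ← apply_abs_of_even legCosh_neg y]
  exact legCosh_strictMonoOn (abs_nonneg x) (abs_nonneg y) h

theorem legCosh_le_legCosh {x y : ℝ} (h : |x| ≤ |y|) : legCosh x ≤ legCosh y := by
  rw [← apply_abs_of_even legCosh_neg x, ← apply_abs_of_even legCosh_neg y]
  exact legCosh_strictMonoOn.monotoneOn (abs_nonneg x) (abs_nonneg y) h

theorem legSinh_strictAntiOn : StrictAntiOn legSinh (Set.Ioi 0) := by
  refine strictAntiOn_of_deriv_neg (convex_Ioi 0)
    (fun x hx => (hasDerivAt_legSinh hx).continuousAt.continuousWithinAt) fun x hx => ?_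
  rw [interior_Ioi] at hx
  rw [(hasDerivAt_legSinh hx).deriv, neg_lt_zero]
  exact div_pos hx (pow_pos (sinh_pos_iff.2 hx) 2)

theorem antitone_logCosh_sub_id : Antitone fun x => logCosh x - x := by
  have hderiv (x : ℝ) : HasDerivAt (fun x => logCosh x - x) (tanh x - 1) x :=
    (hasDerivAt_logCosh x).sub (hasDerivAt_id x)
  refine antitone_of_deriv_nonpos (fun x => (hderiv x).differentiableAt) fun x => ?_
  rw [(hderiv x).deriv]
  exact sub_nonpos.2 (tanh_lt_one x).le

theorem sub_log_two_lt_logCosh (x : ℝ) : x - log 2 < logCosh x := by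
  rw [logCosh, cosh_eq, log_div (by positivity) two_ne_zero, sub_lt_sub_iff_right,
    lt_log_iff_exp_lt (by positivity)]
  exact lt_add_of_pos_right _ (exp_pos _)

theorem logSinh_lt_sub_log_two {x : ℝ} (hx : 0 < x) : logSinh x < x - log 2 := by
  have hsinh := sinh_pos_iff.2 hx
  rw [lt_sub_iff_add_lt', logSinh, ← log_mul two_ne_zero hsinh.ne',
    log_lt_iff_lt_exp (by positivity), sinh_eq]
  linarith [exp_pos (-x)]

theorem legCosh_lt_log_two (x : ℝ) : legCosh x < log 2 := by
  rw [← apply_abs_of_even legCosh_neg, legCosh]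
  linarith [sub_log_two_lt_logCosh |x|, mul_le_of_le_one_right (abs_nonneg x) (tanh_lt_one |x|).le]

theorem one_lt_cosh_div_sinh {x : ℝ} (hx : 0 < x) : 1 < cosh x / sinh x :=
  (one_lt_div (sinh_pos_iff.2 hx)).2 (sinh_lt_cosh x)

theorem log_two_lt_legSinh {x : ℝ} (hx : 0 < x) : log 2 < legSinh x := by
  rw [legSinh]
  linarith [logSinh_lt_sub_log_two hx, lt_mul_of_one_lt_right hx (one_lt_cosh_div_sinh hx)]

theorem logSinh_lt_logCosh {x : ℝ} (hx : 0 < x) : logSinh x < logCosh x :=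
  log_lt_log (sinh_pos_iff.2 hx) (sinh_lt_cosh x)

theorem logCosh_sub_logSinh_le {x : ℝ} (hx : 0 < x) :
    logCosh x - logSinh x ≤ 1 / (2 * (sinh x * cosh x)) := by
  have hsinh := sinh_pos_iff.2 hx
  have hcosh := cosh_pos x
  -- With `l = log (coth x)`, this is the inequality `l ≤ sinh l`.
  refine (self_le_sinh_iff.2 (sub_pos.2 (logSinh_lt_logCosh hx)).le).trans_eq ?_
  rw [logCosh, logSinh, ← log_div hcosh.ne' hsinh.ne', sinh_log (by positivity)]
  field_simp
  linarith [cosh_sq x]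

theorem legSinh_sub_legCosh {x : ℝ} (hx : 0 < x) :
    legSinh x - legCosh x = x / (sinh x * cosh x) + (logCosh x - logSinh x) := by
  rw [legSinh, legCosh, tanh_eq_sinh_div_cosh]
  field_simp [(sinh_pos_iff.2 hx).ne', (cosh_pos x).ne']
  linear_combination x * cosh_sq x

theorem mul_sinh_lt_mul_sinh {x y : ℝ} (hx : 0 < x) (hxy : x < y) :
    y * sinh x < x * sinh y := by
  have hconv : StrictConvexOn ℝ (Set.Ici 0) sinh := by
    refine StrictMonoOn.strictConvexOn_of_deriv (convex_Ici 0) continuous_sinh.continuousOn ?_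
    rw [Real.deriv_sinh, interior_Ici]
    exact cosh_strictMonoOn.mono Set.Ioi_subset_Ici_self
  have hslope := hconv.secant_strict_mono (a := 0) Set.self_mem_Ici hx.le (hx.trans hxy).le hx.ne'
    (hx.trans hxy).ne' hxy
  simp only [sinh_zero, sub_zero] at hslope
  rw [div_lt_div_iff₀ hx (hx.trans hxy)] at hslope
  linarith

theorem mul_one_sub_tanh_sq_mul_tanh_lt {x y : ℝ} (hx : 0 < x) (hxy : x < y) :
    y * (1 - tanh y ^ 2) * tanh x < x * (1 - tanh x ^ 2) * tanh y := by
  have hslope := mul_sinh_lt_mul_sinh (mul_pos two_pos hx) (mul_lt_mul_of_pos_left hxy two_pos)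
  rw [sinh_two_mul, sinh_two_mul] at hslope
  have hcx := cosh_pos x
  have hcy := cosh_pos y
  rw [one_sub_tanh_sq, one_sub_tanh_sq, tanh_eq_sinh_div_cosh, tanh_eq_sinh_div_cosh]
  field_simp
  linarith

/-! ### The key monotonicity statements -/

/-- The function `legCosh` tilted by a multiple of `logCosh`. -/
noncomputable def tiltedLeg (c x : ℝ) : ℝ := legCosh x - c * logCosh x

theorem tiltedLeg_neg (c x : ℝ) : tiltedLeg c (-x) = tiltedLeg c x := by
  rw [tiltedLeg, legCosh_neg, logCosh_neg, tiltedLeg]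

/-- The derivative of `tiltedLeg c`. -/
noncomputable def tiltedLegDeriv (c x : ℝ) : ℝ := x * (1 - tanh x ^ 2) - c * tanh x

theorem hasDerivAt_tiltedLeg (c x : ℝ) : HasDerivAt (tiltedLeg c) (tiltedLegDeriv c x) x :=
  (hasDerivAt_legCosh x).sub ((hasDerivAt_logCosh x).const_mul c)

theorem exists_tiltedLeg_peak {y : ℝ} (hy : 0 < y) :
    ∃ c, StrictMonoOn (tiltedLeg c) (Set.Icc 0 y) ∧ StrictAntiOn (tiltedLeg c) (Set.Ici y) := by
  refine ⟨y * (1 - tanh y ^ 2) / tanh y,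
    strictMonoOn_of_deriv_pos (convex_Icc 0 y)
      (fun x _ => (hasDerivAt_tiltedLeg _ x).continuousAt.continuousWithinAt) fun x hx => ?_,
    strictAntiOn_of_deriv_neg (convex_Ici y)
      (fun x _ => (hasDerivAt_tiltedLeg _ x).continuousAt.continuousWithinAt) fun x hx => ?_⟩
  · rw [interior_Icc] at hx
    rw [(hasDerivAt_tiltedLeg _ x).deriv, tiltedLegDeriv, sub_pos, div_mul_eq_mul_div,
      div_lt_iff₀ (tanh_pos hy)]
    exact mul_one_sub_tanh_sq_mul_tanh_lt hx.1 hx.2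
  · rw [interior_Ici] at hx
    rw [(hasDerivAt_tiltedLeg _ x).deriv, tiltedLegDeriv, sub_neg, div_mul_eq_mul_div,
      lt_div_iff₀ (tanh_pos hy)]
    exact mul_one_sub_tanh_sq_mul_tanh_lt hy hx

/-- The tilt for which `tiltedLegDeriv` has its maximum on the positive half-line at `u`. -/
noncomputable def peakTilt (u : ℝ) : ℝ := 1 - 2 * (u * tanh u)

theorem hasDerivAt_tiltedLegDeriv_peakTilt (u x : ℝ) :
    HasDerivAt (tiltedLegDeriv (peakTilt u))
      ((1 - tanh x ^ 2) * (2 * (u * tanh u - x * tanh x))) x := by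
  have htanh := hasDerivAt_tanh x
  refine (((hasDerivAt_id x).mul ((htanh.pow 2).const_sub 1)).sub
    (htanh.const_mul (peakTilt u))).congr_deriv ?_
  simp only [id, Pi.pow_apply, peakTilt]
  push_cast
  ring

theorem tiltedLegDeriv_peakTilt_strictMonoOn (u : ℝ) :
    StrictMonoOn (tiltedLegDeriv (peakTilt u)) (Set.Icc (-u) u) := by
  refine strictMonoOn_of_deriv_pos (convex_Icc (-u) u)
    (fun x _ => (hasDerivAt_tiltedLegDeriv_peakTilt u x).continuousAt.continuousWithinAt)
    fun x hx => ?_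
  rw [interior_Icc] at hx
  rw [(hasDerivAt_tiltedLegDeriv_peakTilt u x).deriv]
  refine mul_pos (one_sub_tanh_sq_pos x) (mul_pos two_pos (sub_pos.2 ?_))
  have heven : Function.Even fun x => x * tanh x := fun x => by simp only [tanh_neg, neg_mul_neg]
  rw [← apply_abs_of_even heven x]
  exact mul_tanh_lt_mul_tanh (abs_nonneg x) (abs_lt.2 hx)

theorem tiltedLegDeriv_peakTilt_antitoneOn {u : ℝ} (hu : 0 ≤ u) :
    AntitoneOn (tiltedLegDeriv (peakTilt u)) (Set.Ici u) := by
  refine antitoneOn_of_deriv_nonpos (convex_Ici u)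
    (fun x _ => (hasDerivAt_tiltedLegDeriv_peakTilt u x).continuousAt.continuousWithinAt)
    (fun x _ => (hasDerivAt_tiltedLegDeriv_peakTilt u x).differentiableAt.differentiableWithinAt)
    fun x hx => ?_
  rw [interior_Ici] at hx
  rw [(hasDerivAt_tiltedLegDeriv_peakTilt u x).deriv]
  exact mul_nonpos_of_nonneg_of_nonpos (one_sub_tanh_sq_pos x).le
    (by linarith [mul_tanh_lt_mul_tanh hu hx])

/-- The difference of a shift of `f` by `κ` and a dilation of `g` by `p`. -/
noncomputable def shiftDiff (f g : ℝ → ℝ) (p κ s : ℝ) : ℝ := f (s + κ) - g (p * s) / p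

theorem hasDerivAt_shiftDiff {f g : ℝ → ℝ} {f' g' p κ s : ℝ} (hp : p ≠ 0)
    (hf : HasDerivAt f f' (s + κ)) (hg : HasDerivAt g g' (p * s)) :
    HasDerivAt (shiftDiff f g p κ) (f' - g') s :=
  (hf.comp_add_const s κ).sub (((hg.comp s ((hasDerivAt_id s).const_mul p)).div_const p).congr_deriv
    (by field_simp))

theorem shiftDiff_tiltedLeg (c p κ s : ℝ) :
    shiftDiff (tiltedLeg c) (tiltedLeg c) p κ s =
      shiftDiff legCosh legCosh p κ s - c * shiftDiff logCosh logCosh p κ s := by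
  simp only [shiftDiff, tiltedLeg]
  ring

section Shift

variable {p κ s t : ℝ}

theorem shiftDiff_logCosh_strictMonoOn (hp : 1 < p) :
    StrictMonoOn (shiftDiff logCosh logCosh p κ) (Set.Iic (κ / (p - 1))) := by
  have hderiv (x : ℝ) := hasDerivAt_shiftDiff (κ := κ) (by linarith : p ≠ 0)
    (hasDerivAt_logCosh (x + κ)) (hasDerivAt_logCosh (p * x))
  refine strictMonoOn_of_deriv_pos (convex_Iic _)
    (fun x _ => (hderiv x).continuousAt.continuousWithinAt) fun x hx => ?_
  rw [interior_Iic, Set.mem_Iio, lt_div_iff₀ (sub_pos.2 hp)] at hx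
  rw [(hderiv x).deriv]
  exact sub_pos.2 (tanh_strictMono (by linarith))

theorem shiftDiff_logCosh_strictAntiOn (hp : 1 < p) :
    StrictAntiOn (shiftDiff logCosh logCosh p κ) (Set.Ici (κ / (p - 1))) := by
  have hderiv (x : ℝ) := hasDerivAt_shiftDiff (κ := κ) (by linarith : p ≠ 0)
    (hasDerivAt_logCosh (x + κ)) (hasDerivAt_logCosh (p * x))
  refine strictAntiOn_of_deriv_neg (convex_Ici _)
    (fun x _ => (hderiv x).continuousAt.continuousWithinAt) fun x hx => ?_
  rw [interior_Ici, Set.mem_Ioi, div_lt_iff₀ (sub_pos.2 hp)] at hx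
  rw [(hderiv x).deriv]
  exact sub_neg.2 (tanh_strictMono (by linarith))

theorem shiftDiff_tiltedLeg_strictMonoOn {u : ℝ} (hp : 1 < p) (hsu : s + κ ≤ u)
    (hs : s ≤ κ / (p - 1)) :
    StrictMonoOn (shiftDiff (tiltedLeg (peakTilt u)) (tiltedLeg (peakTilt u)) p κ)
      (Set.Icc (-κ / (p + 1)) s) := by
  have hderiv (x : ℝ) := hasDerivAt_shiftDiff (κ := κ) (by linarith : p ≠ 0)
    (hasDerivAt_tiltedLeg (peakTilt u) (x + κ)) (hasDerivAt_tiltedLeg (peakTilt u) (p * x))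
  refine strictMonoOn_of_deriv_pos (convex_Icc _ _)
    (fun x _ => (hderiv x).continuousAt.continuousWithinAt) fun x hx => ?_
  rw [interior_Icc, Set.mem_Ioo, div_lt_iff₀ (by linarith)] at hx
  rw [le_div_iff₀ (sub_pos.2 hp)] at hs
  have hxs := mul_lt_mul_of_pos_left hx.2 (sub_pos.2 hp)
  rw [(hderiv x).deriv]
  exact sub_pos.2 (tiltedLegDeriv_peakTilt_strictMonoOn u ⟨by linarith, by linarith⟩
    ⟨by linarith, by linarith⟩ (by linarith))

theorem shiftDiff_tiltedLeg_monotoneOn {u : ℝ} (hp : 1 < p) (hu : 0 ≤ u)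
    (huκ : u ≤ κ / (p - 1) + κ) :
    MonotoneOn (shiftDiff (tiltedLeg (peakTilt u)) (tiltedLeg (peakTilt u)) p κ)
      (Set.Ici (κ / (p - 1))) := by
  have hderiv (x : ℝ) := hasDerivAt_shiftDiff (κ := κ) (by linarith : p ≠ 0)
    (hasDerivAt_tiltedLeg (peakTilt u) (x + κ)) (hasDerivAt_tiltedLeg (peakTilt u) (p * x))
  refine monotoneOn_of_deriv_nonneg (convex_Ici _)
    (fun x _ => (hderiv x).continuousAt.continuousWithinAt)
    (fun x _ => (hderiv x).differentiableAt.differentiableWithinAt) fun x hx => ?_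
  rw [interior_Ici, Set.mem_Ioi] at hx
  have hx' := (div_lt_iff₀ (sub_pos.2 hp)).1 hx
  rw [(hderiv x).deriv]
  exact sub_nonneg.2 (tiltedLegDeriv_peakTilt_antitoneOn hu
    (Set.mem_Ici.2 (by linarith)) (Set.mem_Ici.2 (by linarith)) (by linarith))

theorem exists_shiftDiff_tiltedLeg_lt (hp : 1 < p) (hκ : 0 < κ) (hsκ : 0 < s + κ)
    (ht : -κ / (p + 1) ≤ t) (htκ : t < κ / (p - 1)) (hts : t < s) :
    ∃ u, 0 < u ∧ u ≤ s + κ ∧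
      shiftDiff (tiltedLeg (peakTilt u)) (tiltedLeg (peakTilt u)) p κ t <
        shiftDiff (tiltedLeg (peakTilt u)) (tiltedLeg (peakTilt u)) p κ s := by
  rcases le_or_gt s (κ / (p - 1)) with hs | hs
  · exact ⟨s + κ, hsκ, le_rfl, shiftDiff_tiltedLeg_strictMonoOn hp le_rfl hs ⟨ht, hts.le⟩
      ⟨ht.trans hts.le, le_rfl⟩ hts⟩
  · have hu : 0 < κ / (p - 1) + κ := add_pos (div_pos hκ (sub_pos.2 hp)) hκ
    refine ⟨κ / (p - 1) + κ, hu, by linarith, ?_⟩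
    calc _ < shiftDiff (tiltedLeg (peakTilt _)) (tiltedLeg (peakTilt _)) p κ (κ / (p - 1)) :=
        shiftDiff_tiltedLeg_strictMonoOn hp le_rfl le_rfl ⟨ht, htκ.le⟩
          ⟨ht.trans htκ.le, le_rfl⟩ htκ
      _ ≤ _ := shiftDiff_tiltedLeg_monotoneOn hp hu.le le_rfl Set.self_mem_Ici hs.le hs.le

theorem neg_div_le_of_abs_mul_lt_abs_add (hp : 1 < p) (htκ : t < κ / (p - 1))
    (h : |p * t| < |t + κ|) : -κ / (p + 1) ≤ t := by
  rw [lt_div_iff₀ (sub_pos.2 hp)] at htκ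
  rw [div_le_iff₀ (by linarith)]
  rcases lt_abs.1 h with h | h <;> linarith [neg_abs_le (p * t)]

theorem shiftDiff_logSinh_lt (hp : 0 < p) (hs : 0 < s + κ) :
    shiftDiff logSinh logCosh p κ s < κ - (1 - 1 / p) * log 2 := by
  have hdiv := div_lt_div_of_pos_right (sub_log_two_lt_logCosh (p * s)) hp
  have hsplit : (p * s - log 2) / p = s - 1 / p * log 2 := by field_simp
  rw [shiftDiff]
  linarith [logSinh_lt_sub_log_two hs]

theorem lt_shiftDiff_logCosh (hp : 1 < p) (ht : κ / (p - 1) ≤ t) :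
    κ - (1 - 1 / p) * log 2 < shiftDiff logCosh logCosh p κ t := by
  have hp0 : 0 < p := one_pos.trans hp
  rw [div_le_iff₀ (sub_pos.2 hp)] at ht
  have hanti := antitone_logCosh_sub_id (by linarith : t + κ ≤ p * t)
  have hlower := mul_lt_mul_of_pos_left (sub_log_two_lt_logCosh (t + κ))
    (sub_pos.2 ((div_lt_one hp0).2 hp))
  calc κ - (1 - 1 / p) * log 2
      = (1 - 1 / p) * (t + κ - log 2) - (-(t + κ) + p * t) / p := by field_simp; ring
    _ < (1 - 1 / p) * logCosh (t + κ) - (-(t + κ) + p * t) / p := by linarith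
    _ = logCosh (t + κ) - (logCosh (t + κ) - (t + κ) + p * t) / p := by field_simp; ring
    _ ≤ shiftDiff logCosh logCosh p κ t := by
        rw [shiftDiff]
        gcongr
        linarith

theorem shiftDiff_legCosh_lt_legSinh_of_abs_le (hp : 1 < p) (hs : 0 < s + κ)
    (h : |t + κ| ≤ |p * t|) :
    shiftDiff legCosh legCosh p κ t < shiftDiff legSinh legCosh p κ s := by
  have hp0 : 0 < p := one_pos.trans hp
  calc shiftDiff legCosh legCosh p κ t
      ≤ legCosh (t + κ) - legCosh (t + κ) / p :=
        sub_le_sub_left (div_le_div_of_nonneg_right (legCosh_le_legCosh h) hp0.le) _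
    _ = (1 - 1 / p) * legCosh (t + κ) := by ring
    _ < (1 - 1 / p) * log 2 :=
        mul_lt_mul_of_pos_left (legCosh_lt_log_two _) (sub_pos.2 ((div_lt_one hp0).2 hp))
    _ = log 2 - log 2 / p := by ring
    _ < shiftDiff legSinh legCosh p κ s :=
        sub_lt_sub (log_two_lt_legSinh hs) (div_lt_div_of_pos_right (legCosh_lt_log_two _) hp0)

theorem shiftDiff_legCosh_lt_legSinh_of_tiltedLeg_lt {u : ℝ} (hu : 0 < u) (hus : u ≤ s + κ)
    (heq : shiftDiff logSinh logCosh p κ s = shiftDiff logCosh logCosh p κ t)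
    (htilt : shiftDiff (tiltedLeg (peakTilt u)) (tiltedLeg (peakTilt u)) p κ t <
      shiftDiff (tiltedLeg (peakTilt u)) (tiltedLeg (peakTilt u)) p κ s) :
    shiftDiff legCosh legCosh p κ t < shiftDiff legSinh legCosh p κ s := by
  have hy : 0 < s + κ := hu.trans_le hus
  set gap := logCosh (s + κ) - logSinh (s + κ) with hgap_def
  have hgap : 0 < gap := sub_pos.2 (logSinh_lt_logCosh hy)
  have hlog : shiftDiff logCosh logCosh p κ s = gap + shiftDiff logCosh logCosh p κ t := by
    rw [← heq, shiftDiff, shiftDiff, hgap_def]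
    ring
  have hleg : shiftDiff legSinh legCosh p κ s - shiftDiff legCosh legCosh p κ s =
      (s + κ) / (sinh (s + κ) * cosh (s + κ)) + gap := by
    rw [← legSinh_sub_legCosh hy, shiftDiff, shiftDiff]
    ring
  have htanh : u * tanh u ≤ s + κ := (mul_le_of_le_one_right hu.le (tanh_lt_one u).le).trans hus
  have hbound : 2 * (u * tanh u) * gap ≤ (s + κ) / (sinh (s + κ) * cosh (s + κ)) :=
    calc 2 * (u * tanh u) * gap ≤ 2 * (s + κ) * (1 / (2 * (sinh (s + κ) * cosh (s + κ)))) := by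
          gcongr
          exact logCosh_sub_logSinh_le hy
      _ = (s + κ) / (sinh (s + κ) * cosh (s + κ)) := by field_simp
  rw [shiftDiff_tiltedLeg, shiftDiff_tiltedLeg, hlog, peakTilt] at htilt
  linarith

theorem shiftDiff_legCosh_lt_legSinh (hp : 1 < p) (hκ : 0 < κ) (hs : 0 < s + κ)
    (heq : shiftDiff logSinh logCosh p κ s = shiftDiff logCosh logCosh p κ t) :
    shiftDiff legCosh legCosh p κ t < shiftDiff legSinh legCosh p κ s := by
  have htκ : t < κ / (p - 1) := by
    by_contra! hcon
    linarith [shiftDiff_logSinh_lt (one_pos.trans hp) hs, lt_shiftDiff_logCosh hp hcon]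
  rcases le_or_gt |t + κ| |p * t| with habs | habs
  · exact shiftDiff_legCosh_lt_legSinh_of_abs_le hp hs habs
  · have hts : t < s := by
      by_contra! hcon
      have hmono := (shiftDiff_logCosh_strictMonoOn (κ := κ) hp).monotoneOn
        (Set.mem_Iic.2 (hcon.trans htκ.le)) (Set.mem_Iic.2 htκ.le) hcon
      rw [← heq] at hmono
      exact absurd ((sub_le_sub_iff_right _).1 hmono) (logSinh_lt_logCosh hs).not_ge
    obtain ⟨u, hu, hus, htilt⟩ := exists_shiftDiff_tiltedLeg_lt hp hκ hs
      (neg_div_le_of_abs_mul_lt_abs_add hp htκ habs) htκ hts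
    exact shiftDiff_legCosh_lt_legSinh_of_tiltedLeg_lt hu hus heq htilt

theorem logSinh_strictMonoOn : StrictMonoOn logSinh (Set.Ioi 0) := fun _ hx _ _ hxy =>
  log_lt_log (sinh_pos_iff.2 hx) (sinh_lt_sinh.2 hxy)

theorem shiftDiff_logSinh_strictMonoOn (hp : 0 < p) :
    StrictMonoOn (shiftDiff logSinh logCosh p κ) (Set.Ioi (-κ)) := by
  have hderiv (x : ℝ) (hx : -κ < x) := hasDerivAt_shiftDiff (p := p) hp.ne'
    (hasDerivAt_logSinh (by linarith : 0 < x + κ)) (hasDerivAt_logCosh (p * x))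
  refine strictMonoOn_of_deriv_pos (convex_Ioi _)
    (fun x hx => (hderiv x hx).continuousAt.continuousWithinAt) fun x hx => ?_
  rw [interior_Ioi] at hx
  rw [(hderiv x hx).deriv]
  linarith [one_lt_cosh_div_sinh (neg_lt_iff_pos_add.1 hx), tanh_lt_one (p * x)]

theorem shiftDiff_legSinh_lt (hp : 0 < p) (hκ : 0 < κ) (hs : 0 < s + κ) (ht : 0 < t + -κ)
    (heq : shiftDiff logSinh logCosh p κ s = shiftDiff logSinh logCosh p (-κ) t) :
    shiftDiff legSinh legCosh p (-κ) t < shiftDiff legSinh legCosh p κ s := by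
  have hst : s < t := by
    refine ((shiftDiff_logSinh_strictMonoOn hp).lt_iff_lt (Set.mem_Ioi.2 (by linarith))
      (Set.mem_Ioi.2 (by linarith))).1 (heq.trans_lt (sub_lt_sub_right ?_ _))
    exact logSinh_strictMonoOn ht (Set.mem_Ioi.2 (by linarith)) (by linarith)
  have habs : |p * s| < |p * t| := by
    rw [abs_mul, abs_mul, abs_of_pos (by linarith : 0 < t)]
    exact mul_lt_mul_of_pos_left (abs_lt.2 ⟨by linarith, hst⟩) (abs_pos.2 hp.ne')
  have hshift : s + κ < t + -κ := by
    have hlog := div_lt_div_of_pos_right (logCosh_lt_logCosh habs) hp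
    rw [← logSinh_strictMonoOn.lt_iff_lt hs ht]
    rw [shiftDiff, shiftDiff] at heq
    linarith
  exact sub_lt_sub (legSinh_strictAntiOn hs ht hshift)
    (div_lt_div_of_pos_right (legCosh_lt_legCosh habs) hp)

theorem shiftDiff_neg_neg {f g : ℝ → ℝ} (hf : Function.Even f) (hg : Function.Even g)
    (p κ s : ℝ) : shiftDiff f g p (-κ) (-s) = shiftDiff f g p κ s := by
  rw [shiftDiff, ← neg_add, hf, mul_neg, hg, shiftDiff]

theorem abs_add_lt_of_shiftDiff_logCosh_eq (hp : 1 < p) (hκ : 0 < κ) (hs : 0 < s) (hts : t < s)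
    (heq : shiftDiff logCosh logCosh p κ s = shiftDiff logCosh logCosh p κ t) :
    |t + κ| < s + κ := by
  by_contra! hcon
  have hst : s + κ ≤ -t + -κ := by
    rcases abs_cases (t + κ) with ⟨habs, _⟩ | ⟨habs, _⟩ <;> linarith
  refine absurd heq (ne_of_gt ?_)
  calc shiftDiff logCosh logCosh p κ t = shiftDiff logCosh logCosh p (-κ) (-t) :=
        (shiftDiff_neg_neg logCosh_neg logCosh_neg p κ t).symm
    _ < shiftDiff logCosh logCosh p 0 (-t) :=
        sub_lt_sub_right (logCosh_strictMonoOn (Set.mem_Ici.2 (by linarith))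
          (Set.mem_Ici.2 (by linarith)) (by linarith)) _
    _ ≤ shiftDiff logCosh logCosh p 0 s :=
        (shiftDiff_logCosh_strictAntiOn hp).antitoneOn (by simpa using hs.le)
          (by rw [zero_div, Set.mem_Ici]; linarith) (by linarith)
    _ < shiftDiff logCosh logCosh p κ s :=
        sub_lt_sub_right (logCosh_strictMonoOn (Set.mem_Ici.2 (by linarith))
          (Set.mem_Ici.2 (by linarith)) (by linarith)) _

theorem exists_shiftDiff_tiltedLeg_lt_of_abs_le (hp : 1 < p) (hκ : κ / (p - 1) ≤ s)
    (habs : |t + κ| < s + κ) (ht : |t + κ| ≤ |p * t|)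
    (heq : shiftDiff logCosh logCosh p κ s = shiftDiff logCosh logCosh p κ t) :
    ∃ c, shiftDiff (tiltedLeg c) (tiltedLeg c) p κ t <
      shiftDiff (tiltedLeg c) (tiltedLeg c) p κ s := by
  have hp0 : 0 < p := one_pos.trans hp
  have hy : 0 < s + κ := (abs_nonneg _).trans_lt habs
  have hys : s + κ ≤ p * s := by linarith [(div_le_iff₀ (sub_pos.2 hp)).1 hκ]
  obtain ⟨c, hmono, hanti⟩ := exists_tiltedLeg_peak hy
  have heven (x : ℝ) := apply_abs_of_even (tiltedLeg_neg c) x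
  have hlt : tiltedLeg c (t + κ) < tiltedLeg c (s + κ) :=
    heven (t + κ) ▸ hmono ⟨abs_nonneg _, habs.le⟩ ⟨hy.le, le_rfl⟩ habs
  have hle : tiltedLeg c (p * s) ≤ tiltedLeg c (s + κ) :=
    hanti.antitoneOn Set.self_mem_Ici hys hys
  refine ⟨c, ?_⟩
  suffices hsub : (tiltedLeg c (p * s) - tiltedLeg c (p * t)) / p <
      tiltedLeg c (s + κ) - tiltedLeg c (t + κ) by
    rw [sub_div] at hsub
    rw [shiftDiff, shiftDiff]
    linarith
  rcases le_or_gt |p * t| (s + κ) with hnear | hfar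
  · have hle' : tiltedLeg c (t + κ) ≤ tiltedLeg c (p * t) := by
      rw [← heven (t + κ), ← heven (p * t)]
      exact hmono.monotoneOn ⟨abs_nonneg _, habs.le⟩ ⟨abs_nonneg _, hnear⟩ ht
    exact (div_le_div_of_nonneg_right (by linarith) hp0.le).trans_lt
      (div_lt_self (sub_pos.2 hlt) hp)
  · have hps : |p * t| ≤ |p * s| := by
      by_contra! hcon
      have hlog := div_lt_div_of_pos_right (logCosh_lt_logCosh hcon) hp0
      have hlog' := logCosh_lt_logCosh (habs.trans_eq (abs_of_pos hy).symm)
      rw [shiftDiff, shiftDiff] at heq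
      linarith
    have hle' : tiltedLeg c (p * s) ≤ tiltedLeg c (p * t) := by
      rw [← heven (p * s), ← heven (p * t)]
      exact hanti.antitoneOn hfar.le (hfar.le.trans hps) hps
    exact (div_nonpos_of_nonpos_of_nonneg (sub_nonpos.2 hle') hp0.le).trans_lt (sub_pos.2 hlt)

theorem shiftDiff_legCosh_lt (hp : 1 < p) (hκ : 0 < κ) (hts : t < s)
    (heq : shiftDiff logCosh logCosh p κ s = shiftDiff logCosh logCosh p κ t) :
    shiftDiff legCosh legCosh p κ t < shiftDiff legCosh legCosh p κ s := by
  have htκ : t < κ / (p - 1) := by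
    by_contra! hcon
    exact (shiftDiff_logCosh_strictAntiOn hp hcon (hcon.trans hts.le) hts).ne heq
  have hsκ : κ / (p - 1) < s := by
    by_contra! hcon
    exact (shiftDiff_logCosh_strictMonoOn hp (hts.le.trans hcon) hcon hts).ne' heq
  have hs : 0 < s := (div_pos hκ (sub_pos.2 hp)).trans hsκ
  suffices htilt : ∃ c, shiftDiff (tiltedLeg c) (tiltedLeg c) p κ t <
      shiftDiff (tiltedLeg c) (tiltedLeg c) p κ s by
    obtain ⟨c, hc⟩ := htilt
    rwa [shiftDiff_tiltedLeg, shiftDiff_tiltedLeg, heq, sub_lt_sub_iff_right] at hc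
  rcases lt_or_ge |p * t| |t + κ| with h | h
  · obtain ⟨u, -, -, hu⟩ := exists_shiftDiff_tiltedLeg_lt hp hκ (add_pos hs hκ)
      (neg_div_le_of_abs_mul_lt_abs_add hp htκ h) htκ hts
    exact ⟨_, hu⟩
  · exact exists_shiftDiff_tiltedLeg_lt_of_abs_le hp hsκ.le
      (abs_add_lt_of_shiftDiff_logCosh_eq hp hκ hs hts heq) h heq

end Shift

/-! ### Radial flow -/

theorem hasDerivAt_shiftDiff_radial {f g : ℝ → ℝ} {f' g' p κ s r : ℝ} (hp : p ≠ 0) (hr : r ≠ 0)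
    (hf : HasDerivAt f f' (r * s + r * κ)) (hg : HasDerivAt g g' (p * (r * s))) :
    HasDerivAt (fun r => shiftDiff f g p (r * κ) (r * s))
      (((r * s + r * κ) * f' - f (r * s + r * κ) - (p * (r * s) * g' - g (p * (r * s))) / p
        + shiftDiff f g p (r * κ) (r * s)) / r) r := by
  have hmul (a : ℝ) : HasDerivAt (fun r : ℝ => r * a) a r := by
    simpa using (hasDerivAt_id r).mul_const a
  refine ((hf.comp r ((hmul s).add (hmul κ))).sub
    ((hg.comp r ((hmul s).const_mul p)).div_const p)).congr_deriv ?_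
  rw [shiftDiff]
  field_simp
  ring

section Radial

variable {p κ s t : ℝ}

theorem hasDerivAt_shiftDiff_logCosh_radial (hp : p ≠ 0) {r : ℝ} (hr : r ≠ 0) :
    HasDerivAt (fun r => shiftDiff logCosh logCosh p (r * κ) (r * s))
      ((shiftDiff legCosh legCosh p (r * κ) (r * s)
        + shiftDiff logCosh logCosh p (r * κ) (r * s)) / r) r :=
  hasDerivAt_shiftDiff_radial hp hr (hasDerivAt_logCosh _) (hasDerivAt_logCosh _)

theorem hasDerivAt_shiftDiff_logSinh_radial (hp : p ≠ 0) (hs : 0 < s + κ) {r : ℝ} (hr : 0 < r) :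
    HasDerivAt (fun r => shiftDiff logSinh logCosh p (r * κ) (r * s))
      ((shiftDiff legSinh legCosh p (r * κ) (r * s)
        + shiftDiff logSinh logCosh p (r * κ) (r * s)) / r) r :=
  hasDerivAt_shiftDiff_radial hp hr.ne'
    (hasDerivAt_logSinh (by rw [← mul_add]; exact mul_pos hr hs)) (hasDerivAt_logCosh _)

theorem crossesUpAtOne_shiftDiff_logCosh (hp : 1 < p) (hκ : 0 < κ) (hts : t < s)
    (heq : shiftDiff logCosh logCosh p κ s = shiftDiff logCosh logCosh p κ t) :
    CrossesUpAtOne (fun r => shiftDiff logCosh logCosh p (r * κ) (r * s))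
      (fun r => shiftDiff logCosh logCosh p (r * κ) (r * t)) := by
  have hp0 : p ≠ 0 := (one_pos.trans hp).ne'
  refine crossesUpAtOne_of_hasDerivAt
    (fun r hr => hasDerivAt_shiftDiff_logCosh_radial hp0 hr.ne')
    (fun r hr => hasDerivAt_shiftDiff_logCosh_radial hp0 hr.ne')
    (by simpa only [one_mul] using heq) fun r hr hcross => ?_
  exact div_lt_div_of_pos_right (add_lt_add_of_lt_of_le (shiftDiff_legCosh_lt hp (mul_pos hr hκ)
    (mul_lt_mul_of_pos_left hts hr) hcross) hcross.ge) hr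

theorem crossesUpAtOne_shiftDiff_logSinh_logCosh (hp : 1 < p) (hκ : 0 < κ) (hs : 0 < s + κ)
    (heq : shiftDiff logSinh logCosh p κ s = shiftDiff logCosh logCosh p κ t) :
    CrossesUpAtOne (fun r => shiftDiff logSinh logCosh p (r * κ) (r * s))
      (fun r => shiftDiff logCosh logCosh p (r * κ) (r * t)) := by
  have hp0 : p ≠ 0 := (one_pos.trans hp).ne'
  refine crossesUpAtOne_of_hasDerivAt
    (fun r hr => hasDerivAt_shiftDiff_logSinh_radial hp0 hs hr)
    (fun r hr => hasDerivAt_shiftDiff_logCosh_radial hp0 hr.ne')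
    (by simpa only [one_mul] using heq) fun r hr hcross => ?_
  exact div_lt_div_of_pos_right (add_lt_add_of_lt_of_le (shiftDiff_legCosh_lt_legSinh hp
    (mul_pos hr hκ) (by rw [← mul_add]; exact mul_pos hr hs) hcross) hcross.ge) hr

theorem crossesUpAtOne_shiftDiff_logSinh (hp : 0 < p) (hκ : 0 < κ) (hs : 0 < s + κ)
    (ht : 0 < t + -κ)
    (heq : shiftDiff logSinh logCosh p κ s = shiftDiff logSinh logCosh p (-κ) t) :
    CrossesUpAtOne (fun r => shiftDiff logSinh logCosh p (r * κ) (r * s))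
      (fun r => shiftDiff logSinh logCosh p (r * -κ) (r * t)) := by
  refine crossesUpAtOne_of_hasDerivAt
    (fun r hr => hasDerivAt_shiftDiff_logSinh_radial hp.ne' hs hr)
    (fun r hr => hasDerivAt_shiftDiff_logSinh_radial hp.ne' ht hr)
    (by simpa only [one_mul] using heq) fun r hr hcross => ?_
  rw [mul_neg] at hcross ⊢
  exact div_lt_div_of_pos_right (add_lt_add_of_lt_of_le (shiftDiff_legSinh_lt hp (mul_pos hr hκ)
    (by rw [← mul_add]; exact mul_pos hr hs)
    (by rw [← mul_neg, ← mul_add]; exact mul_pos hr ht) hcross) hcross.ge) hr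

end Radial

/-! ### Signed powers -/

/-- The signed power `sign x * |x| ^ r`. -/
noncomputable def spow (r x : ℝ) : ℝ := |x| ^ (r - 1) * x

section SignedPower

variable {r x y : ℝ}

theorem spow_of_pos (r : ℝ) (hx : 0 < x) : spow r x = x ^ r := by
  rw [spow, abs_of_pos hx, rpow_sub_one hx.ne', div_mul_cancel₀ _ hx.ne']

theorem spow_pos (r : ℝ) (hx : 0 < x) : 0 < spow r x :=
  (rpow_pos_of_pos hx r).trans_eq (spow_of_pos r hx).symm

theorem spow_neg (r x : ℝ) : spow r (-x) = -spow r x := by rw [spow, abs_neg, mul_neg, spow]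

theorem spow_zero (r : ℝ) : spow r 0 = 0 := mul_zero _

theorem spow_one (x : ℝ) : spow 1 x = x := by rw [spow, sub_self, rpow_zero, one_mul]

theorem spow_exp (r x : ℝ) : spow r (exp x) = exp (r * x) := by
  rw [spow_of_pos r (exp_pos x), ← exp_mul, mul_comm]

theorem abs_spow (hr : r ≠ 0) (x : ℝ) : |spow r x| = |x| ^ r := by
  rcases eq_or_ne x 0 with rfl | hx
  · rw [spow_zero, abs_zero, zero_rpow hr]
  · have hx' := abs_pos.2 hx
    rw [spow, abs_mul, abs_of_nonneg (rpow_nonneg hx'.le _), rpow_sub_one hx'.ne',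
      div_mul_cancel₀ _ hx'.ne']

theorem spow_sub_one_mul_self (hr : r ≠ 0) (x : ℝ) : spow (r - 1) x * x = |x| ^ r := by
  rcases eq_or_ne x 0 with rfl | hx
  · rw [mul_zero, abs_zero, zero_rpow hr]
  · have hx' := (abs_pos.2 hx).ne'
    rw [spow, mul_assoc, ← abs_mul_abs_self x, rpow_sub_one hx', rpow_sub_one hx']
    field_simp

theorem spow_mul_of_pos (r : ℝ) (hx : 0 < x) (y : ℝ) : spow r (x * y) = x ^ r * spow r y := by
  rw [spow, abs_mul, abs_of_pos hx, mul_rpow hx.le (abs_nonneg y), rpow_sub_one hx.ne', spow]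
  field_simp

theorem spow_strictMono (hr : 0 < r) : StrictMono (spow r) := by
  refine strictMono_of_odd_strictMonoOn_nonneg (spow_neg r) fun x hx y _ hxy => ?_
  rw [spow_of_pos r (hx.trans_lt hxy)]
  rcases (Set.mem_Ici.1 hx).eq_or_lt with rfl | hx'
  · exact (spow_zero r).trans_lt (rpow_pos_of_pos hxy r)
  · exact (spow_of_pos r hx').trans_lt (rpow_lt_rpow hx hxy hr)

theorem spow_add_spow_pos (hr : 0 < r) (h : 0 < x + y) : 0 < spow r x + spow r y := by
  rw [← neg_lt_iff_pos_add, ← spow_neg]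
  exact spow_strictMono hr (by linarith)

theorem continuous_spow (hr : 0 < r) : Continuous (spow r) := by
  refine continuous_iff_continuousAt.2 fun x => ?_
  rcases eq_or_ne x 0 with rfl | hx
  · rw [ContinuousAt, spow_zero, tendsto_zero_iff_abs_tendsto_zero]
    simpa only [Function.comp_def, abs_spow hr.ne', abs_zero, zero_rpow hr.ne'] using
      (continuous_abs.rpow_const fun _ => .inr hr.le).tendsto (0 : ℝ)
  · exact (continuousAt_id.abs.rpow_const (.inl (abs_pos.2 hx).ne')).mul continuousAt_id

end SignedPower

theorem lpN_neg_left (p x y : ℝ) : lpN p (-x, y) = lpN p (x, y) := by simp only [lpN, abs_neg]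

theorem lpN_neg_right (p x y : ℝ) : lpN p (x, -y) = lpN p (x, y) := by simp only [lpN, abs_neg]

theorem lpN_comm (p x y : ℝ) : lpN p (x, y) = lpN p (y, x) := by rw [lpN, add_comm, lpN]

theorem mem_Cp_iff {p : ℝ} (hp : p ≠ 0) {z : ℝ × ℝ} :
    z ∈ Cp p ↔ |z.1| ^ p + |z.2| ^ p = 1 := by
  rw [← rpow_left_inj (by positivity) zero_le_one (one_div_ne_zero hp), one_rpow]
  rfl

theorem exp_add_add_exp_sub (a x : ℝ) :
    exp (a + x) + exp (a - x) = exp (a + log 2 + logCosh x) := by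
  rw [exp_add _ (logCosh x), exp_add a (log 2), exp_log two_pos, logCosh, exp_log (cosh_pos x),
    cosh_eq, sub_eq_add_neg, exp_add, exp_add]
  ring

theorem exp_add_sub_exp_sub (a : ℝ) {x : ℝ} (hx : 0 < x) :
    exp (a + x) - exp (a - x) = exp (a + log 2 + logSinh x) := by
  rw [exp_add _ (logSinh x), exp_add a (log 2), exp_log two_pos, logSinh,
    exp_log (sinh_pos_iff.2 hx), sinh_eq, sub_eq_add_neg a, exp_add, exp_add]
  ring

theorem lpN_exp {p : ℝ} (hp : p ≠ 0) (m s : ℝ) :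
    lpN p (exp (m + s), exp (m - s)) = exp (m + log 2 / p + logCosh (p * s) / p) := by
  simp only [lpN, abs_exp, ← exp_mul, add_mul, sub_mul]
  rw [exp_add_add_exp_sub, ← exp_mul, mul_comm s p]
  congr 1
  field_simp

/-- The cross product of the coordinatewise `r`-th signed powers of `z` and `v`, divided by the
`ℓ_p` norm of that of `z`. For `r = 1` it is the usual cross product of a point `z` of `C_p` with
`v`; for `r = p - 1` it is, up to a constant, the rate of change of `‖v‖_p ^ p` when `z` is the
endpoint of the chord `v` and moves with unit speed on `C_p`. -/
noncomputable def powCross (p r : ℝ) (v z : ℝ × ℝ) : ℝ :=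
  (spow r z.1 * spow r v.2 - spow r z.2 * spow r v.1) / lpN p (spow r z.1, spow r z.2)

theorem powCross_one {p : ℝ} {z : ℝ × ℝ} (hz : z ∈ Cp p) (v : ℝ × ℝ) :
    powCross p 1 v z = z.1 * v.2 - z.2 * v.1 := by
  simp only [powCross, spow_one]
  rw [show lpN p (z.1, z.2) = 1 from hz, div_one]

theorem powCross_neg_neg (p r a b x y : ℝ) :
    powCross p r (a, b) (-x, -y) = powCross p r (b, a) (y, x) := by
  simp only [powCross, spow_neg, lpN_neg_left, lpN_neg_right]
  rw [lpN_comm]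
  ring

section LogCoordinates

variable {p r d κ m s : ℝ}

theorem powCross_exp_neg (hp : p ≠ 0) :
    powCross p r (exp (d - κ), exp (d + κ)) (exp (m + s), -exp (m - s)) =
      exp (r * d + (1 - 1 / p) * log 2 + shiftDiff logCosh logCosh p (r * κ) (r * s)) := by
  simp only [powCross, spow_neg, spow_exp, lpN_neg_right, neg_mul, sub_neg_eq_add, ← exp_add]
  rw [show r * (m + s) + r * (d + κ) = r * (m + d) + (r * s + r * κ) by ring,
    show r * (m - s) + r * (d - κ) = r * (m + d) - (r * s + r * κ) by ring, exp_add_add_exp_sub,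
    mul_add r m s, mul_sub r m s, lpN_exp hp, ← exp_sub, shiftDiff]
  congr 1
  ring

theorem powCross_exp (hp : p ≠ 0) (hr : 0 < r) (hs : 0 < s + κ) :
    powCross p r (exp (d - κ), exp (d + κ)) (exp (m + s), exp (m - s)) =
      exp (r * d + (1 - 1 / p) * log 2 + shiftDiff logSinh logCosh p (r * κ) (r * s)) := by
  simp only [powCross, spow_exp, ← exp_add]
  rw [show r * (m + s) + r * (d + κ) = r * (m + d) + (r * s + r * κ) by ring,
    show r * (m - s) + r * (d - κ) = r * (m + d) - (r * s + r * κ) by ring,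
    exp_add_sub_exp_sub _ (by rw [← mul_add]; exact mul_pos hr hs),
    mul_add r m s, mul_sub r m s, lpN_exp hp, ← exp_sub, shiftDiff]
  congr 1
  ring

end LogCoordinates

theorem exists_eq_exp_add_and_eq_exp_sub {x y : ℝ} (hx : 0 < x) (hy : 0 < y) :
    ∃ m s, x = exp (m + s) ∧ y = exp (m - s) := by
  refine ⟨(log x + log y) / 2, (log x - log y) / 2, ?_, ?_⟩
  · rw [show (log x + log y) / 2 + (log x - log y) / 2 = log x by ring, exp_log hx]
  · rw [show (log x + log y) / 2 - (log x - log y) / 2 = log y by ring, exp_log hy]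

theorem CrossesUpAtOne.of_eq_exp {f g F G : ℝ → ℝ} {d C : ℝ}
    (hF : ∀ r, 0 < r → F r = exp (r * d + C + f r))
    (hG : ∀ r, 0 < r → G r = exp (r * d + C + g r)) (h1 : F 1 = G 1)
    (hfg : f 1 = g 1 → CrossesUpAtOne f g) : CrossesUpAtOne F G := by
  rw [hF 1 one_pos, hG 1 one_pos] at h1
  obtain ⟨hle, hge⟩ := hfg (add_left_cancel (exp_injective h1))
  refine ⟨fun r hr0 hr1 => ?_, fun r hr => ?_⟩
  · rw [hF r hr0, hG r hr0]
    exact exp_le_exp.2 (by linarith [hle r hr0 hr1])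
  · rw [hF r (one_pos.trans_le hr), hG r (one_pos.trans_le hr)]
    exact exp_le_exp.2 (by linarith [hge r hr])

section Crossing

variable {p a b x₁ y₁ x₂ y₂ : ℝ}

theorem crossesUpAtOne_powCross_of_snd_neg_of_snd_neg (hp : 1 < p) (ha : 0 < a) (hab : a < b)
    (hx₁ : 0 < x₁) (hy₁ : 0 < y₁) (hx₂ : 0 < x₂) (hy₂ : 0 < y₂) (hslope : x₂ * y₁ < x₁ * y₂)
    (h : powCross p 1 (a, b) (x₁, -y₁) = powCross p 1 (a, b) (x₂, -y₂)) :
    CrossesUpAtOne (fun r => powCross p r (a, b) (x₁, -y₁))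
      (fun r => powCross p r (a, b) (x₂, -y₂)) := by
  have hp0 : p ≠ 0 := (one_pos.trans hp).ne'
  obtain ⟨d, κ, rfl, rfl⟩ := exists_eq_exp_add_and_eq_exp_sub (ha.trans hab) ha
  obtain ⟨m, s, rfl, rfl⟩ := exists_eq_exp_add_and_eq_exp_sub hx₁ hy₁
  obtain ⟨n, t, rfl, rfl⟩ := exists_eq_exp_add_and_eq_exp_sub hx₂ hy₂
  have hκ : 0 < κ := by linarith [exp_lt_exp.1 hab]
  rw [← exp_add, ← exp_add, exp_lt_exp] at hslope
  refine .of_eq_exp (fun r _ => powCross_exp_neg hp0) (fun r _ => powCross_exp_neg hp0) h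
    fun heq => crossesUpAtOne_shiftDiff_logCosh hp hκ (by linarith) ?_
  simpa only [one_mul] using heq

theorem crossesUpAtOne_powCross_of_snd_pos_of_snd_neg (hp : 1 < p) (ha : 0 < a) (hab : a < b)
    (hx₁ : 0 < x₁) (hy₁ : 0 < y₁) (hx₂ : 0 < x₂) (hy₂ : 0 < y₂) (hcross : y₁ * a < x₁ * b)
    (h : powCross p 1 (a, b) (x₁, y₁) = powCross p 1 (a, b) (x₂, -y₂)) :
    CrossesUpAtOne (fun r => powCross p r (a, b) (x₁, y₁))
      (fun r => powCross p r (a, b) (x₂, -y₂)) := by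
  have hp0 : p ≠ 0 := (one_pos.trans hp).ne'
  obtain ⟨d, κ, rfl, rfl⟩ := exists_eq_exp_add_and_eq_exp_sub (ha.trans hab) ha
  obtain ⟨m, s, rfl, rfl⟩ := exists_eq_exp_add_and_eq_exp_sub hx₁ hy₁
  obtain ⟨n, t, rfl, rfl⟩ := exists_eq_exp_add_and_eq_exp_sub hx₂ hy₂
  have hκ : 0 < κ := by linarith [exp_lt_exp.1 hab]
  rw [← exp_add, ← exp_add, exp_lt_exp] at hcross
  have hs : 0 < s + κ := by linarith
  refine .of_eq_exp (fun r hr => powCross_exp hp0 hr hs) (fun r _ => powCross_exp_neg hp0) h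
    fun heq => crossesUpAtOne_shiftDiff_logSinh_logCosh hp hκ hs ?_
  simpa only [one_mul] using heq

theorem crossesUpAtOne_powCross_of_fst_pos_of_fst_neg (hp : 0 < p) (ha : 0 < a) (hab : a < b)
    (hx₁ : 0 < x₁) (hy₁ : 0 < y₁) (hx₂ : 0 < x₂) (hy₂ : 0 < y₂) (hcross₁ : y₁ * a < x₁ * b)
    (hcross₂ : x₂ * b < y₂ * a)
    (h : powCross p 1 (a, b) (x₁, y₁) = powCross p 1 (a, b) (-x₂, -y₂)) :
    CrossesUpAtOne (fun r => powCross p r (a, b) (x₁, y₁))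
      (fun r => powCross p r (a, b) (-x₂, -y₂)) := by
  simp only [powCross_neg_neg] at h ⊢
  obtain ⟨d, κ, rfl, rfl⟩ := exists_eq_exp_add_and_eq_exp_sub (ha.trans hab) ha
  obtain ⟨m, s, rfl, rfl⟩ := exists_eq_exp_add_and_eq_exp_sub hx₁ hy₁
  obtain ⟨n, t, rfl, rfl⟩ := exists_eq_exp_add_and_eq_exp_sub hy₂ hx₂
  have hκ : 0 < κ := by linarith [exp_lt_exp.1 hab]
  rw [← exp_add, ← exp_add, exp_lt_exp] at hcross₁ hcross₂
  have hs : 0 < s + κ := by linarith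
  have ht : 0 < t + -κ := by linarith
  refine .of_eq_exp (fun r hr => powCross_exp hp.ne' hr hs)
    (fun r hr => ?_) h fun heq => crossesUpAtOne_shiftDiff_logSinh hp hκ hs ht ?_
  · simpa only [sub_neg_eq_add, ← sub_eq_add_neg] using
      powCross_exp (d := d) (m := n) hp.ne' hr ht
  · simpa only [one_mul] using heq

end Crossing

theorem fst_pos_of_snd_neg {p : ℝ} (hp : 1 ≤ p) {z₁ z₂ : ℝ × ℝ} (h₁ : z₁ ∈ Cp p)
    (h₂ : z₂ ∈ Cp p) (hx₁ : 0 < z₁.1) (hy₂ : z₂.2 < 0) (hv : (z₁ - z₂).1 < (z₁ - z₂).2)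
    (hy₁ : z₁.2 < 0) : 0 < z₂.1 := by
  rw [mem_Cp_iff (by linarith), abs_of_pos hx₁, abs_of_neg hy₁] at h₁
  rw [mem_Cp_iff (by linarith), abs_of_neg hy₂] at h₂
  rw [Prod.fst_sub, Prod.snd_sub] at hv
  by_contra! hx₂
  have hsum : 1 ≤ (z₁.1 + -z₁.2) ^ p :=
    h₁.symm.trans_le (add_rpow_le_rpow_add hx₁.le (neg_nonneg.2 hy₁.le) hp)
  have hlt := rpow_lt_rpow (by linarith) (by linarith : z₁.1 + -z₁.2 < -z₂.2)
    (by linarith : 0 < p)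
  linarith [rpow_nonneg (abs_nonneg z₂.1) p]

theorem crossesUpAtOne_powCross {p : ℝ} (hp : 1 < p) {z₁ z₂ : ℝ × ℝ} (h₁ : z₁ ∈ Cp p)
    (h₂ : z₂ ∈ Cp p) (hv₁ : 0 < (z₁ - z₂).1) (hv : (z₁ - z₂).1 < (z₁ - z₂).2) (hx₁ : 0 < z₁.1)
    (hy₂ : z₂.2 < 0) (hy₁ : z₁.2 ≠ 0) (hx₂ : z₂.1 ≠ 0) (hdet : 0 < z₂.1 * z₁.2 - z₂.2 * z₁.1) :
    CrossesUpAtOne (fun r => powCross p r (z₁ - z₂) z₁) (fun r => powCross p r (z₁ - z₂) z₂) := by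
  have hone : powCross p 1 (z₁ - z₂) z₁ = powCross p 1 (z₁ - z₂) z₂ := by
    rw [powCross_one h₁, powCross_one h₂, Prod.fst_sub, Prod.snd_sub]
    ring
  have hpos := fst_pos_of_snd_neg hp.le h₁ h₂ hx₁ hy₂ hv
  obtain ⟨x₁, y₁⟩ := z₁
  obtain ⟨x₂, y₂⟩ := z₂
  simp only [Prod.mk_sub_mk] at *
  obtain ⟨y₂, rfl⟩ : ∃ y, y₂ = -y := ⟨-y₂, (neg_neg y₂).symm⟩
  have hy₂' := neg_lt_zero.1 hy₂
  rcases hy₁.lt_or_gt with hy₁ | hy₁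
  · obtain ⟨y₁, rfl⟩ : ∃ y, y₁ = -y := ⟨-y₁, (neg_neg y₁).symm⟩
    exact crossesUpAtOne_powCross_of_snd_neg_of_snd_neg hp hv₁ hv hx₁ (neg_lt_zero.1 hy₁)
      (hpos hy₁) hy₂' (by linarith) hone
  rcases hx₂.lt_or_gt with hx₂ | hx₂
  · obtain ⟨x₂, rfl⟩ : ∃ x, x₂ = -x := ⟨-x₂, (neg_neg x₂).symm⟩
    exact crossesUpAtOne_powCross_of_fst_pos_of_fst_neg (one_pos.trans hp) hv₁ hv hx₁ hy₁
      (neg_lt_zero.1 hx₂) hy₂' (by linarith) (by linarith) hone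
  · exact crossesUpAtOne_powCross_of_snd_pos_of_snd_neg hp hv₁ hv hx₁ hy₁ hx₂ hy₂'
      (by linarith) hone

/-! ### The unit circle and its speed -/

section UnitCircle

variable {p : ℝ}

theorem lpN_pos (p : ℝ) {z : ℝ × ℝ} (hz : z ≠ 0) : 0 < lpN p z := by
  refine rpow_pos_of_pos ?_ _
  by_cases h : z.1 = 0
  · have h' : z.2 ≠ 0 := fun h' => hz (Prod.ext h h')
    exact add_pos_of_nonneg_of_pos (by positivity) (rpow_pos_of_pos (abs_pos.2 h') p)
  · exact add_pos_of_pos_of_nonneg (rpow_pos_of_pos (abs_pos.2 h) p) (by positivity)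

theorem lpN_rpow (hp : p ≠ 0) (z : ℝ × ℝ) : lpN p z ^ p = |z.1| ^ p + |z.2| ^ p := by
  rw [lpN, ← rpow_mul (by positivity), one_div_mul_cancel hp, rpow_one]

theorem lpN_smul (hp : p ≠ 0) (c : ℝ) (z : ℝ × ℝ) : lpN p (c • z) = |c| * lpN p z := by
  simp only [lpN, Prod.smul_fst, Prod.smul_snd, smul_eq_mul, abs_mul,
    mul_rpow (abs_nonneg c) (abs_nonneg _)]
  rw [← mul_add, mul_rpow (by positivity) (by positivity), ← rpow_mul (abs_nonneg c),
    mul_one_div_cancel hp, rpow_one]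

theorem continuous_lpN (hp : 0 < p) : Continuous (lpN p) :=
  ((continuous_fst.abs.rpow_const fun _ => .inr hp.le).add
    (continuous_snd.abs.rpow_const fun _ => .inr hp.le)).rpow_const
      fun _ => .inr (one_div_pos.2 hp).le

theorem hasDerivAt_lpN (hp : 1 < p) {z : ℝ → ℝ × ℝ} {z' : ℝ × ℝ} {t : ℝ}
    (hz : HasDerivAt z z' t) (h0 : z t ≠ 0) :
    HasDerivAt (fun t => lpN p (z t))
      (lpN p (z t) ^ (1 - p) * (spow (p - 1) (z t).1 * z'.1 + spow (p - 1) (z t).2 * z'.2)) t := by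
  have hp0 : p ≠ 0 := (one_pos.trans hp).ne'
  have hpos : 0 < |(z t).1| ^ p + |(z t).2| ^ p := by
    rw [← lpN_rpow hp0]
    exact rpow_pos_of_pos (lpN_pos p h0) p
  have hsum := ((hasDerivAt_abs_rpow (z t).1 hp).comp t hz.fst).add
    ((hasDerivAt_abs_rpow (z t).2 hp).comp t hz.snd)
  refine (hsum.rpow_const (p := 1 / p) (.inl hpos.ne')).congr_deriv ?_
  have hexp : lpN p (z t) ^ (1 - p) = (|(z t).1| ^ p + |(z t).2| ^ p) ^ (1 / p - 1) := by
    rw [lpN, ← rpow_mul hpos.le]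
    congr 1
    field_simp
  rw [hexp, spow, spow, show p - 1 - 1 = p - 2 by ring]
  simp only [Pi.add_apply, Function.comp_apply]
  field_simp

theorem sin_cos_ne_zero (φ : ℝ) : (sin φ, cos φ) ≠ 0 := fun h => by
  rw [Prod.mk_eq_zero] at h
  have := sin_sq_add_cos_sq φ
  rw [h.1, h.2] at this
  norm_num at this

theorem Np_pos (p φ : ℝ) : 0 < Np p φ := lpN_pos p (sin_cos_ne_zero φ)

theorem Np_rpow_eq (hp : p ≠ 0) (φ : ℝ) :
    Np p φ ^ p = spow (p - 1) (sin φ) * sin φ + spow (p - 1) (cos φ) * cos φ := by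
  rw [spow_sub_one_mul_self hp, spow_sub_one_mul_self hp]
  exact lpN_rpow hp (sin φ, cos φ)

theorem rho_mem_Cp (hp : p ≠ 0) (φ : ℝ) : rho p φ ∈ Cp p := by
  have hN := Np_pos p φ
  have hrho : rho p φ = (Np p φ)⁻¹ • (cos φ, sin φ) := by
    simp only [rho, Prod.smul_mk, smul_eq_mul, inv_mul_eq_div]
  rw [Cp, Set.mem_ofPred_eq, hrho, lpN_smul hp, lpN_comm, abs_of_pos (inv_pos.2 hN)]
  exact inv_mul_cancel₀ hN.ne'

theorem hasDerivAt_Np (hp : 1 < p) (φ : ℝ) :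
    HasDerivAt (Np p)
      (Np p φ ^ (1 - p) * (spow (p - 1) (sin φ) * cos φ - spow (p - 1) (cos φ) * sin φ)) φ :=
  (hasDerivAt_lpN hp ((hasDerivAt_sin φ).prodMk (hasDerivAt_cos φ))
    (sin_cos_ne_zero φ)).congr_deriv (by rw [mul_neg, ← sub_eq_add_neg]; rfl)

theorem hasDerivAt_rho (hp : 1 < p) (φ : ℝ) :
    HasDerivAt (rho p)
      ((Np p φ ^ 2)⁻¹ • (-spow (p - 1) (rho p φ).2, spow (p - 1) (rho p φ).1)) φ := by
  have hN := Np_pos p φ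
  have hspow : ∀ x, spow (p - 1) (x / Np p φ) = Np p φ ^ (1 - p) * spow (p - 1) x := fun x => by
    rw [div_eq_inv_mul, spow_mul_of_pos _ (inv_pos.2 hN), inv_rpow hN.le, ← rpow_neg hN.le, neg_sub]
  have hNp : Np p φ = Np p φ ^ (1 - p) *
      (spow (p - 1) (sin φ) * sin φ + spow (p - 1) (cos φ) * cos φ) := by
    rw [← Np_rpow_eq (by linarith), ← rpow_add hN, sub_add_cancel, rpow_one]
  have htrig := sin_sq_add_cos_sq φ
  refine (((hasDerivAt_cos φ).div (hasDerivAt_Np hp φ) hN.ne').prodMk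
    ((hasDerivAt_sin φ).div (hasDerivAt_Np hp φ) hN.ne')).congr_deriv ?_
  simp only [rho, hspow, Prod.smul_mk, smul_eq_mul, Prod.mk.injEq]
  rw [div_eq_inv_mul, div_eq_inv_mul]
  constructor
  · congr 1
    linear_combination (-sin φ) * hNp - Np p φ ^ (1 - p) * spow (p - 1) (sin φ) * htrig
  · congr 1
    linear_combination cos φ * hNp + Np p φ ^ (1 - p) * spow (p - 1) (cos φ) * htrig

theorem continuous_rho (hp : 1 < p) : Continuous (rho p) :=
  continuous_iff_continuousAt.2 fun φ => (hasDerivAt_rho hp φ).continuousAt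

theorem speed_eq (hp : 1 < p) (φ : ℝ) :
    speed p φ =
      (Np p φ ^ 2)⁻¹ * lpN p (spow (p - 1) (rho p φ).1, spow (p - 1) (rho p φ).2) := by
  have hN := Np_pos p φ
  rw [speed, (hasDerivAt_rho hp φ).deriv, lpN_smul (by linarith), lpN_neg_left, lpN_comm,
    abs_of_pos (by positivity)]

theorem rho_ne_zero (hp : p ≠ 0) (φ : ℝ) : rho p φ ≠ 0 := fun h => by
  have hmem := (mem_Cp_iff hp).1 (rho_mem_Cp hp φ)
  simp only [h, Prod.fst_zero, Prod.snd_zero, abs_zero, zero_rpow hp, add_zero, zero_ne_one] at hmem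

theorem lpN_spow_rho_pos (hp : 1 < p) (φ : ℝ) :
    0 < lpN p (spow (p - 1) (rho p φ).1, spow (p - 1) (rho p φ).2) := by
  have hinj : ∀ {x}, spow (p - 1) x = 0 → x = 0 := fun h =>
    (spow_strictMono (sub_pos.2 hp)).injective (h.trans (spow_zero _).symm)
  refine lpN_pos p fun h => rho_ne_zero (one_pos.trans hp).ne' φ ?_
  rw [Prod.mk_eq_zero] at h
  exact Prod.ext (hinj h.1) (hinj h.2)

theorem speed_pos (hp : 1 < p) (φ : ℝ) : 0 < speed p φ := by
  rw [speed_eq hp]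
  exact mul_pos (inv_pos.2 (pow_pos (Np_pos p φ) 2)) (lpN_spow_rho_pos hp φ)

theorem continuous_inv_Np_sq (hp : 1 < p) : Continuous fun φ => (Np p φ ^ 2)⁻¹ :=
  ((continuous_iff_continuousAt.2 fun φ => (hasDerivAt_Np hp φ).continuousAt).pow 2).inv₀ fun φ =>
    (pow_pos (Np_pos p φ) 2).ne'

theorem continuous_speed (hp : 1 < p) : Continuous (speed p) := by
  rw [funext (speed_eq hp)]
  have hspow := continuous_spow (sub_pos.2 hp)
  exact (continuous_inv_Np_sq hp).mul ((continuous_lpN (one_pos.trans hp)).comp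
    ((hspow.comp (continuous_rho hp).fst).prodMk (hspow.comp (continuous_rho hp).snd)))

theorem Np_neg (p φ : ℝ) : Np p (-φ) = Np p φ := by simp only [Np, sin_neg, cos_neg, abs_neg]

theorem Np_add_pi_div_two (p φ : ℝ) : Np p (φ + π / 2) = Np p φ := by
  simp only [Np, sin_add_pi_div_two, cos_add_pi_div_two, abs_neg, add_comm]

theorem rho_neg (p φ : ℝ) : rho p (-φ) = ((rho p φ).1, -(rho p φ).2) := by
  simp only [rho, Np_neg, sin_neg, cos_neg, neg_div]

theorem rho_add_pi_div_two (p φ : ℝ) : rho p (φ + π / 2) = (-(rho p φ).2, (rho p φ).1) := by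
  simp only [rho, Np_add_pi_div_two, sin_add_pi_div_two, cos_add_pi_div_two, neg_div]

theorem rho_add_two_pi (p φ : ℝ) : rho p (φ + 2 * π) = rho p φ := by
  simp only [rho, Np, sin_add_two_pi, cos_add_two_pi]

theorem speed_neg (hp : 1 < p) (φ : ℝ) : speed p (-φ) = speed p φ := by
  rw [speed_eq hp, speed_eq hp, Np_neg, rho_neg, spow_neg, lpN_neg_right]

theorem speed_periodic (hp : 1 < p) : Function.Periodic (speed p) (π / 2) := fun φ => by
  rw [speed_eq hp, speed_eq hp, Np_add_pi_div_two, rho_add_pi_div_two, spow_neg, lpN_neg_left,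
    lpN_comm]

end UnitCircle

/-! ### The arc-length parametrization -/

/-- The signed `ℓ_p` length of the arc of the unit circle between the directions `0` and `φ`. -/
noncomputable def arcLength (p φ : ℝ) : ℝ := ∫ t in (0 : ℝ)..φ, speed p t

/-- A quarter of the `ℓ_p` circumference of the unit circle, that is `π_p / 2`. -/
noncomputable def quarterLength (p : ℝ) : ℝ := arcLength p (π / 2)

/-- The inverse of `arcLength p`, which is a bijection for `1 < p`. -/
noncomputable def angle (p u : ℝ) : ℝ := Function.invFun (arcLength p) u

/-- The counterclockwise unit-speed parametrization of the unit circle, starting at `(1, 0)`. -/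
noncomputable def arcPoint (p u : ℝ) : ℝ × ℝ := rho p (angle p u)

section ArcLength

variable {p : ℝ}

theorem arcLength_zero (p : ℝ) : arcLength p 0 = 0 := intervalIntegral.integral_same

theorem integral_speed (hp : 1 < p) (a b : ℝ) :
    ∫ t in a..b, speed p t = arcLength p b - arcLength p a :=
  (intervalIntegral.integral_interval_sub_left ((continuous_speed hp).intervalIntegrable 0 b)
    ((continuous_speed hp).intervalIntegrable 0 a)).symm

theorem hasDerivAt_arcLength (hp : 1 < p) (φ : ℝ) : HasDerivAt (arcLength p) (speed p φ) φ :=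
  ((continuous_speed hp).integral_hasStrictDerivAt 0 φ).hasDerivAt

theorem arcLength_strictMono (hp : 1 < p) : StrictMono (arcLength p) :=
  strictMono_of_hasDerivAt_pos (hasDerivAt_arcLength hp) (speed_pos hp)

theorem arcLength_surjective (hp : 1 < p) : Function.Surjective (arcLength p) := by
  have hint := (continuous_speed hp).intervalIntegrable (μ := volume) 0 (π / 2)
  exact (continuous_iff_continuousAt.2
    fun φ => (hasDerivAt_arcLength hp φ).continuousAt).surjective
    ((speed_periodic hp).tendsto_atTop_intervalIntegral_of_pos' hint (speed_pos hp)
      (by positivity))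
    ((speed_periodic hp).tendsto_atBot_intervalIntegral_of_pos' hint (speed_pos hp)
      (by positivity))

theorem arcLength_neg (hp : 1 < p) (φ : ℝ) : arcLength p (-φ) = -arcLength p φ := by
  have hint := intervalIntegral.integral_comp_neg (a := 0) (b := φ) (speed p)
  simp only [speed_neg hp, neg_zero] at hint
  rw [arcLength, arcLength, hint, intervalIntegral.integral_symm]

theorem arcLength_add_pi_div_two (hp : 1 < p) (φ : ℝ) :
    arcLength p (φ + π / 2) = arcLength p φ + quarterLength p := by
  have hint := (speed_periodic hp).intervalIntegral_add_eq φ 0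
  rw [zero_add, integral_speed hp, integral_speed hp, arcLength_zero, sub_zero] at hint
  rw [quarterLength, ← hint, add_sub_cancel]

theorem arcLength_pi_div_four (hp : 1 < p) : arcLength p (π / 4) = quarterLength p / 2 := by
  have h := arcLength_add_pi_div_two hp (-(π / 4))
  rw [show -(π / 4) + π / 2 = π / 4 by ring, arcLength_neg hp] at h
  linarith

theorem arcLength_pos (hp : 1 < p) {φ : ℝ} (hφ : 0 < φ) : 0 < arcLength p φ :=
  (arcLength_zero p).symm.trans_lt (arcLength_strictMono hp hφ)

theorem quarterLength_pos (hp : 1 < p) : 0 < quarterLength p := arcLength_pos hp (by positivity)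

theorem piP_eq (hp : 1 < p) : piP p = 2 * quarterLength p := by
  have hset : {t : ℝ | t ∈ Set.Ico 0 (2 * π) ∧ rho p t ∈ Cp p} = Set.Ico 0 (2 * π) :=
    Set.sep_eq_self_iff_mem_true.2 fun t _ => rho_mem_Cp (one_pos.trans hp).ne' t
  have hfull : arcLength p (2 * π) = 4 * quarterLength p := by
    rw [show 2 * π = 0 + π / 2 + π / 2 + π / 2 + π / 2 by ring]
    simp only [arcLength_add_pi_div_two hp, arcLength_zero]
    ring
  rw [piP, muP, hset, integral_Ico_eq_integral_Ioc, ← integral_of_le (by positivity),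
    integral_speed hp, hfull, arcLength_zero]
  ring

theorem arcLength_angle (hp : 1 < p) (u : ℝ) : arcLength p (angle p u) = u :=
  Function.rightInverse_invFun (arcLength_surjective hp) u

theorem angle_arcLength (hp : 1 < p) (φ : ℝ) : angle p (arcLength p φ) = φ :=
  Function.leftInverse_invFun (arcLength_strictMono hp).injective φ

theorem angle_strictMono (hp : 1 < p) : StrictMono (angle p) := fun a b hab => by
  rwa [← (arcLength_strictMono hp).lt_iff_lt, arcLength_angle hp, arcLength_angle hp]

theorem continuous_angle (hp : 1 < p) : Continuous (angle p) :=
  (angle_strictMono hp).monotone.continuous_of_surjective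
    fun φ => ⟨arcLength p φ, angle_arcLength hp φ⟩

theorem angle_zero (hp : 1 < p) : angle p 0 = 0 := by
  simpa only [arcLength_zero] using angle_arcLength hp 0

theorem angle_neg (hp : 1 < p) (u : ℝ) : angle p (-u) = -angle p u := by
  apply (arcLength_strictMono hp).injective
  rw [arcLength_angle hp, arcLength_neg hp, arcLength_angle hp]

theorem angle_add_quarterLength (hp : 1 < p) (u : ℝ) :
    angle p (u + quarterLength p) = angle p u + π / 2 := by
  apply (arcLength_strictMono hp).injective
  rw [arcLength_angle hp, arcLength_add_pi_div_two hp, arcLength_angle hp]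

theorem angle_add_four_mul_quarterLength (hp : 1 < p) (u : ℝ) :
    angle p (u + 4 * quarterLength p) = angle p u + 2 * π := by
  rw [show u + 4 * quarterLength p =
    u + quarterLength p + quarterLength p + quarterLength p + quarterLength p by ring]
  simp only [angle_add_quarterLength hp]
  ring

theorem hasDerivAt_angle (hp : 1 < p) (u : ℝ) :
    HasDerivAt (angle p) (speed p (angle p u))⁻¹ u :=
  (hasDerivAt_arcLength hp (angle p u)).of_local_left_inverse (continuous_angle hp).continuousAt
    (speed_pos hp _).ne' (.of_forall (arcLength_angle hp))

theorem arcPoint_neg (hp : 1 < p) (u : ℝ) :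
    arcPoint p (-u) = ((arcPoint p u).1, -(arcPoint p u).2) := by
  rw [arcPoint, angle_neg hp, rho_neg, arcPoint]

theorem arcPoint_add_quarterLength (hp : 1 < p) (u : ℝ) :
    arcPoint p (u + quarterLength p) = (-(arcPoint p u).2, (arcPoint p u).1) := by
  rw [arcPoint, angle_add_quarterLength hp, rho_add_pi_div_two, arcPoint]

theorem hasDerivAt_arcPoint (hp : 1 < p) (u : ℝ) :
    HasDerivAt (arcPoint p)
      ((lpN p (spow (p - 1) (arcPoint p u).1, spow (p - 1) (arcPoint p u).2))⁻¹ •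
        (-spow (p - 1) (arcPoint p u).2, spow (p - 1) (arcPoint p u).1)) u := by
  refine ((hasDerivAt_rho hp (angle p u)).scomp u (hasDerivAt_angle hp u)).congr_deriv ?_
  have hN := Np_pos p (angle p u)
  rw [speed_eq hp, smul_smul, mul_inv, inv_inv, arcPoint]
  congr 1
  field_simp

end ArcLength

/-! ### Chords -/

section RhoChord

variable {p α β : ℝ}

theorem cross_rho (p α β : ℝ) :
    (rho p β).1 * (rho p α).2 - (rho p β).2 * (rho p α).1 =
      sin (α - β) / (Np p α * Np p β) := by
  rw [sin_sub, rho, rho]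
  field_simp

theorem fst_rho_abs (p φ : ℝ) : (rho p |φ|).1 = (rho p φ).1 := by
  rcases abs_choice φ with h | h <;> simp only [h, rho_neg]

theorem hasDerivAt_fst_rho (hp : 1 < p) (φ : ℝ) :
    HasDerivAt (fun φ => (rho p φ).1) ((Np p φ ^ 2)⁻¹ * -spow (p - 1) (rho p φ).2) φ :=
  (hasDerivAt_rho hp φ).fst

theorem hasDerivAt_snd_rho (hp : 1 < p) (φ : ℝ) :
    HasDerivAt (fun φ => (rho p φ).2) ((Np p φ ^ 2)⁻¹ * spow (p - 1) (rho p φ).1) φ :=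
  (hasDerivAt_rho hp φ).snd

theorem fst_rho_strictAntiOn (hp : 1 < p) :
    StrictAntiOn (fun φ => (rho p φ).1) (Set.Icc 0 π) := by
  refine strictAntiOn_of_deriv_neg (convex_Icc _ _) (continuous_rho hp).fst.continuousOn
    fun φ hφ => ?_
  rw [interior_Icc] at hφ
  rw [(hasDerivAt_fst_rho hp φ).deriv]
  have hy : 0 < (rho p φ).2 := div_pos (sin_pos_of_mem_Ioo hφ) (Np_pos p φ)
  exact mul_neg_of_pos_of_neg (inv_pos.2 (pow_pos (Np_pos p φ) 2))
    (neg_neg_of_pos (spow_pos (p - 1) hy))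

theorem fst_rho_lt_fst_rho (hp : 1 < p) (hβ : -π ≤ β) (hlt : β < α) (hsum : α + β < 0) :
    (rho p β).1 < (rho p α).1 := by
  have hβ0 : |β| = -β := abs_of_neg (by linarith)
  have hαβ : |α| < |β| := by
    rw [hβ0, abs_lt, neg_neg]
    exact ⟨hlt, by linarith⟩
  rw [← fst_rho_abs p α, ← fst_rho_abs p β]
  exact fst_rho_strictAntiOn hp ⟨abs_nonneg α, by linarith⟩ ⟨abs_nonneg β, by linarith⟩ hαβ

theorem snd_sub_fst_rho_strictMonoOn (hp : 1 < p) :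
    StrictMonoOn (fun φ => (rho p φ).2 - (rho p φ).1) (Set.Icc (-(π / 4)) (3 * π / 4)) := by
  refine strictMonoOn_of_deriv_pos (convex_Icc _ _)
    ((continuous_rho hp).snd.sub (continuous_rho hp).fst).continuousOn fun φ hφ => ?_
  rw [interior_Icc] at hφ
  have hN := Np_pos p φ
  have hsin : 0 < sin (φ + π / 4) :=
    sin_pos_of_pos_of_lt_pi (by linarith [hφ.1]) (by linarith [hφ.2])
  rw [sin_add, cos_pi_div_four, sin_pi_div_four, ← add_mul] at hsin
  have hxy : 0 < (rho p φ).1 + (rho p φ).2 := by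
    rw [rho, ← add_div, add_comm]
    exact div_pos (pos_of_mul_pos_left hsin (by positivity)) hN
  rw [((hasDerivAt_snd_rho hp φ).fun_sub (hasDerivAt_fst_rho hp φ)).deriv, ← mul_sub,
    sub_neg_eq_add]
  exact mul_pos (inv_pos.2 (pow_pos hN 2)) (spow_add_spow_pos (sub_pos.2 hp) hxy)

theorem snd_sub_fst_rho_reflect (p φ : ℝ) :
    (rho p (-(π / 2) - φ)).2 - (rho p (-(π / 2) - φ)).1 = (rho p φ).2 - (rho p φ).1 := by
  rw [show -(π / 2) - φ = -(φ + π / 2) by ring, rho_neg, rho_add_pi_div_two]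
  ring

theorem snd_sub_fst_rho_lt (hp : 1 < p) (hlt : β < α) (hsum : -(π / 2) < α + β)
    (hα : α ≤ 3 * π / 4) : (rho p β).2 - (rho p β).1 < (rho p α).2 - (rho p α).1 := by
  have hmono := snd_sub_fst_rho_strictMonoOn hp
  rcases le_or_gt (-(π / 4)) β with hβ | hβ
  · exact hmono ⟨hβ, by linarith⟩ ⟨by linarith, hα⟩ hlt
  · rw [← snd_sub_fst_rho_reflect p β]
    exact hmono ⟨by linarith, by linarith⟩ ⟨by linarith, hα⟩ (by linarith)

theorem crossesUpAtOne_powCross_rho (hp : 1 < p) (hsum : α + β ∈ Set.Ioo (-(π / 2)) 0)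
    (hdiff : α - β ∈ Set.Ioo 0 π) (hα : α ≠ 0) (hβ : β ≠ -(π / 2)) :
    CrossesUpAtOne (fun r => powCross p r (rho p α - rho p β) (rho p α))
      (fun r => powCross p r (rho p α - rho p β) (rho p β)) := by
  have hp0 : p ≠ 0 := (one_pos.trans hp).ne'
  have hNα := Np_pos p α
  have hNβ := Np_pos p β
  obtain ⟨hsum₁, hsum₂⟩ := hsum
  obtain ⟨hdiff₁, hdiff₂⟩ := hdiff
  have hfst := fst_rho_lt_fst_rho hp (by linarith) (sub_pos.1 hdiff₁) hsum₂
  have hsnd := snd_sub_fst_rho_lt hp (sub_pos.1 hdiff₁) hsum₁ (by linarith)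
  have hsinα : sin α ≠ 0 :=
    mt (sin_eq_zero_iff_of_lt_of_lt (by linarith) (by linarith)).1 hα
  have hcosβ : cos β ≠ 0 := fun h => hβ <| eq_neg_of_add_eq_zero_left <|
    (sin_eq_zero_iff_of_lt_of_lt (by linarith) (by linarith)).1 ((sin_add_pi_div_two β).trans h)
  refine crossesUpAtOne_powCross hp (rho_mem_Cp hp0 α) (rho_mem_Cp hp0 β) (sub_pos.2 hfst) ?_
    (div_pos (cos_pos_of_mem_Ioo ⟨by linarith, by linarith⟩) hNα)
    (div_neg_of_neg_of_pos (sin_neg_of_neg_of_neg_pi_lt (by linarith) (by linarith)) hNβ)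
    (div_ne_zero hsinα hNα.ne') (div_ne_zero hcosβ hNβ.ne') ?_
  · rw [Prod.fst_sub, Prod.snd_sub]
    linarith
  · rw [cross_rho]
    exact div_pos (sin_pos_of_pos_of_lt_pi hdiff₁ hdiff₂) (mul_pos hNα hNβ)

end RhoChord

/-- The chord of the unit circle whose endpoints lie at arc length `h` on either side of the point
with arc-length parameter `μ`. -/
noncomputable def chord (p h μ : ℝ) : ℝ × ℝ := arcPoint p (μ + h) - arcPoint p (μ - h)

section Chord

variable {p h μ : ℝ}

theorem angle_add_angle_mem_Ioo (hp : 1 < p) (h : ℝ) (hμ : μ ∈ Set.Ioo (-(quarterLength p / 2)) 0) :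
    angle p (μ + h) + angle p (μ - h) ∈ Set.Ioo (-(π / 2)) 0 := by
  have hmono := angle_strictMono hp
  have hneg := hmono (show μ + h < -(μ - h) by linarith [hμ.2])
  have hrot := hmono (show -(μ - h) < μ + h + quarterLength p by linarith [hμ.1])
  rw [angle_neg hp] at hneg hrot
  rw [angle_add_quarterLength hp] at hrot
  constructor <;> linarith

theorem angle_sub_angle_mem_Ioo (hp : 1 < p) (h₀ : 0 < h) (hq : h < quarterLength p) (μ : ℝ) :
    angle p (μ + h) - angle p (μ - h) ∈ Set.Ioo 0 π := by
  have hmono := angle_strictMono hp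
  have hpos := hmono (show μ - h < μ + h by linarith)
  have hhalf := hmono (show μ + h < μ - h + quarterLength p + quarterLength p by linarith)
  rw [angle_add_quarterLength hp, angle_add_quarterLength hp] at hhalf
  constructor <;> linarith

theorem chord_ne_zero (hp : 1 < p) (h₀ : 0 < h) (hq : h < quarterLength p)
    (hμ : μ ∈ Set.Ioo (-(quarterLength p / 2)) 0) : chord p h μ ≠ 0 := fun hzero => by
  obtain ⟨hsum₁, hsum₂⟩ := angle_add_angle_mem_Ioo hp h hμ
  obtain ⟨hdiff₁, hdiff₂⟩ := angle_sub_angle_mem_Ioo hp h₀ hq μ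
  have hlt := fst_rho_lt_fst_rho hp (by linarith) (sub_pos.1 hdiff₁) hsum₂
  exact hlt.ne' (congrArg Prod.fst (sub_eq_zero.1 hzero))

theorem crossesUpAtOne_powCross_chord (hp : 1 < p) (h₀ : 0 < h) (hq : h < quarterLength p)
    (hμ : μ ∈ Set.Ioo (-(quarterLength p / 2)) 0) (hne : μ ∉ ({-h, h - quarterLength p} : Set ℝ)) :
    CrossesUpAtOne (fun r => powCross p r (chord p h μ) (arcPoint p (μ + h)))
      (fun r => powCross p r (chord p h μ) (arcPoint p (μ - h))) := by
  have hinj := (angle_strictMono hp).injective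
  simp only [Set.mem_insert_iff, Set.mem_singleton_iff, not_or] at hne
  have hangle : angle p (-quarterLength p) = -(π / 2) := by
    rw [angle_neg hp, ← zero_add (quarterLength p), angle_add_quarterLength hp, angle_zero hp,
      zero_add]
  refine crossesUpAtOne_powCross_rho hp (angle_add_angle_mem_Ioo hp h hμ)
    (angle_sub_angle_mem_Ioo hp h₀ hq μ) (fun hzero => hne.1 ?_) (fun hright => hne.2 ?_)
  · linarith [hinj (hzero.trans (angle_zero hp).symm)]
  · linarith [hinj (hright.trans hangle.symm)]

theorem hasDerivAt_chord (hp : 1 < p) (h μ : ℝ) :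
    HasDerivAt (chord p h) (deriv (arcPoint p) (μ + h) - deriv (arcPoint p) (μ - h)) μ :=
  ((hasDerivAt_arcPoint hp (μ + h)).differentiableAt.hasDerivAt.comp_add_const μ h).sub
    ((hasDerivAt_arcPoint hp (μ - h)).differentiableAt.hasDerivAt.comp_sub_const μ h)

theorem hasDerivAt_lpN_chord (hp : 1 < p) (h₀ : chord p h μ ≠ 0) :
    HasDerivAt (fun μ => lpN p (chord p h μ))
      (lpN p (chord p h μ) ^ (1 - p) *
        (powCross p (p - 1) (chord p h μ) (arcPoint p (μ + h)) -
          powCross p (p - 1) (chord p h μ) (arcPoint p (μ - h)))) μ := by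
  refine (hasDerivAt_lpN hp (hasDerivAt_chord hp h μ) h₀).congr_deriv ?_
  rw [(hasDerivAt_arcPoint hp (μ + h)).deriv, (hasDerivAt_arcPoint hp (μ - h)).deriv]
  simp only [powCross, Prod.fst_sub, Prod.snd_sub, Prod.smul_mk, smul_eq_mul]
  ring

theorem continuous_lpN_chord (hp : 1 < p) (h : ℝ) : Continuous fun μ => lpN p (chord p h μ) :=
  (continuous_lpN (one_pos.trans hp)).comp
    (continuous_iff_continuousAt.2 fun μ => (hasDerivAt_chord hp h μ).continuousAt)

theorem lpN_chord_neg (hp : 1 < p) (h μ : ℝ) : lpN p (chord p h (-μ)) = lpN p (chord p h μ) := by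
  rw [chord, chord, show -μ + h = -(μ - h) by ring, show -μ - h = -(μ + h) by ring,
    arcPoint_neg hp, arcPoint_neg hp, ← lpN_neg_left]
  congr 1
  ext
  · exact neg_sub _ _
  · exact neg_sub_neg _ _

theorem lpN_chord_periodic (hp : 1 < p) (h : ℝ) :
    Function.Periodic (fun μ => lpN p (chord p h μ)) (quarterLength p) := fun μ => by
  simp only [chord]
  rw [add_right_comm, add_sub_right_comm, arcPoint_add_quarterLength hp,
    arcPoint_add_quarterLength hp, ← lpN_neg_left, lpN_comm]
  congr 1
  ext
  · rfl
  · exact (neg_sub _ _).trans (neg_sub_neg _ _)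

theorem exists_lpN_chord_eq (hp : 1 < p) (h μ : ℝ) :
    ∃ ν ∈ Set.Icc (-(quarterLength p / 2)) 0, lpN p (chord p h μ) = lpN p (chord p h ν) := by
  obtain ⟨ν, hν, heq⟩ := (lpN_chord_periodic hp h).exists_mem_Ico (quarterLength_pos hp) μ
    (-(quarterLength p / 2))
  rcases le_total ν 0 with hν₀ | hν₀
  · exact ⟨ν, ⟨hν.1, hν₀⟩, heq⟩
  · exact ⟨-ν, ⟨by linarith [hν.2], neg_nonpos.2 hν₀⟩, heq.trans (lpN_chord_neg hp h ν).symm⟩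

theorem lpN_chord_monotoneOn (hp : 2 ≤ p) (h₀ : 0 < h) (hq : h < quarterLength p) :
    MonotoneOn (fun μ => lpN p (chord p h μ)) (Set.Icc (-(quarterLength p / 2)) 0) := by
  intro a ha b hb hab
  have hp1 : 1 < p := one_lt_two.trans_le hp
  have hsub := Set.Ioo_subset_Ioo ha.1 hb.2
  refine le_of_hasDerivAt_nonneg_off_countable hab
    (Set.toFinite {-h, h - quarterLength p}).countable (continuous_lpN_chord hp1 h).continuousOn
    (fun μ hμ => hasDerivAt_lpN_chord hp1 (chord_ne_zero hp1 h₀ hq (hsub hμ)))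
    fun μ hμ hne => mul_nonneg (rpow_nonneg (rpow_nonneg (by positivity) _) _) (sub_nonneg.2 ?_)
  exact (crossesUpAtOne_powCross_chord hp1 h₀ hq (hsub hμ) hne).2 (p - 1) (by linarith)

theorem lpN_chord_antitoneOn (hp : 1 < p) (hp2 : p ≤ 2) (h₀ : 0 < h) (hq : h < quarterLength p) :
    AntitoneOn (fun μ => lpN p (chord p h μ)) (Set.Icc (-(quarterLength p / 2)) 0) := by
  intro a ha b hb hab
  have hsub := Set.Ioo_subset_Ioo ha.1 hb.2
  refine neg_le_neg_iff.1 (le_of_hasDerivAt_nonneg_off_countable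
    (f := -fun μ => lpN p (chord p h μ)) hab (Set.toFinite {-h, h - quarterLength p}).countable
    (continuous_lpN_chord hp h).neg.continuousOn
    (fun μ hμ => (hasDerivAt_lpN_chord hp (chord_ne_zero hp h₀ hq (hsub hμ))).neg)
    fun μ hμ hne => neg_nonneg.2 (mul_nonpos_of_nonneg_of_nonpos
      (rpow_nonneg (rpow_nonneg (by positivity) _) _) (sub_nonpos.2 ?_)))
  exact (crossesUpAtOne_powCross_chord hp h₀ hq (hsub hμ) hne).1 (p - 1) (by linarith)
    (by linarith)

theorem lpN_chord_zero_le (hp : 1 < p) (hp2 : p ≤ 2) (h₀ : 0 < h) (hq : h < quarterLength p)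
    (μ : ℝ) : lpN p (chord p h 0) ≤ lpN p (chord p h μ) := by
  obtain ⟨ν, hν, heq⟩ := exists_lpN_chord_eq hp h μ
  exact (lpN_chord_antitoneOn hp hp2 h₀ hq hν ⟨hν.1.trans hν.2, le_rfl⟩ hν.2).trans_eq heq.symm

theorem lpN_chord_neg_quarterLength_div_two_le (hp : 2 ≤ p) (h₀ : 0 < h)
    (hq : h < quarterLength p) (μ : ℝ) :
    lpN p (chord p h (-(quarterLength p / 2))) ≤ lpN p (chord p h μ) := by
  obtain ⟨ν, hν, heq⟩ := exists_lpN_chord_eq (one_lt_two.trans_le hp) h μ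
  exact (lpN_chord_monotoneOn hp h₀ hq ⟨le_rfl, hν.1.trans hν.2⟩ hν hν.1).trans_eq heq.symm

end Chord

/-! ### The minimal chord -/

section MinimalChord

variable {p h m φ : ℝ}

theorem arcPoint_arcLength (hp : 1 < p) (φ : ℝ) : arcPoint p (arcLength p φ) = rho p φ := by
  rw [arcPoint, angle_arcLength hp]

theorem chordMin_eq_lpN_chord (hp : 1 < p) (h₀ : 0 ≤ h) (hq : h ≤ 2 * quarterLength p)
    (hmin : ∀ μ, lpN p (chord p h m) ≤ lpN p (chord p h μ)) :
    chordMin p (4 * quarterLength p - 2 * h) = lpN p (chord p h m) := by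
  have hmono := (angle_strictMono hp).monotone
  have hturn := angle_add_four_mul_quarterLength hp
  refine IsLeast.csInf_eq
    ⟨⟨angle p (m + h), angle p (m - h) + 2 * π, ?_, ?_, ?_, ?_⟩, ?_⟩
  · rw [← hturn]
    exact hmono (by linarith)
  · linarith [hmono (show m - h ≤ m + h by linarith)]
  · rw [integral_speed hp, ← hturn, arcLength_angle hp, arcLength_angle hp]
    ring
  · rw [rho_add_two_pi, chord, arcPoint, arcPoint]
  · rintro d ⟨a, b, -, -, hlen, rfl⟩
    rw [integral_speed hp] at hlen
    have ha : rho p a = arcPoint p (arcLength p a - h + h) := by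
      rw [sub_add_cancel, arcPoint_arcLength hp]
    have hb : rho p b = arcPoint p (arcLength p a - h - h) := by
      rw [arcPoint, ← rho_add_two_pi p (angle p (arcLength p a - h - h)), ← hturn,
        show arcLength p a - h - h + 4 * quarterLength p = arcLength p b by linarith,
        angle_arcLength hp]
    rw [ha, hb]
    exact hmin (arcLength p a - h)

theorem lpN_zero_left (hp : p ≠ 0) (x : ℝ) : lpN p (0, x) = |x| := by
  rw [lpN, abs_zero, zero_rpow hp, zero_add, ← rpow_mul (abs_nonneg x), mul_one_div_cancel hp,
    rpow_one]

theorem lpN_diag (hp : p ≠ 0) (x : ℝ) : lpN p (x, x) = 2 ^ (1 / p) * |x| := by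
  rw [lpN, ← two_mul, mul_rpow zero_le_two (by positivity), ← rpow_mul (abs_nonneg x),
    mul_one_div_cancel hp, rpow_one]

theorem chord_arcLength_zero (hp : 1 < p) (φ : ℝ) :
    chord p (arcLength p φ) 0 = (0, 2 * (rho p φ).2) := by
  rw [chord, zero_add, zero_sub, arcPoint_neg hp, arcPoint_arcLength hp]
  ext
  · exact sub_self _
  · exact (sub_neg_eq_add _ _).trans (two_mul _).symm

theorem chord_add_arcLength_neg (hp : 1 < p) (φ : ℝ) :
    chord p (quarterLength p / 2 + arcLength p φ) (-(quarterLength p / 2)) =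
      ((rho p φ).1 + (rho p φ).2, (rho p φ).1 + (rho p φ).2) := by
  rw [chord, neg_add_cancel_left, show -(quarterLength p / 2) - (quarterLength p / 2 +
    arcLength p φ) = -(arcLength p φ + quarterLength p) by ring, arcPoint_neg hp,
    arcPoint_add_quarterLength hp, arcPoint_arcLength hp]
  ext
  · exact sub_neg_eq_add _ _
  · exact (sub_neg_eq_add _ _).trans (add_comm _ _)

theorem rho_nonneg (hφ : φ ∈ Set.Icc 0 (π / 2)) : 0 ≤ rho p φ :=
  ⟨div_nonneg (cos_nonneg_of_mem_Icc ⟨by linarith [hφ.1, pi_pos], hφ.2⟩) (Np_pos p φ).le,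
    div_nonneg (sin_nonneg_of_nonneg_of_le_pi hφ.1 (by linarith [hφ.2, pi_pos])) (Np_pos p φ).le⟩

theorem chordMin_eq_two_mul_snd_rho (hp : 1 < p) (hp2 : p ≤ 2) (hφ : φ ∈ Set.Ioo 0 (π / 2)) :
    chordMin p (4 * quarterLength p - 2 * arcLength p φ) = 2 * (rho p φ).2 := by
  have h₀ := arcLength_pos hp hφ.1
  have hq : arcLength p φ < quarterLength p := arcLength_strictMono hp hφ.2
  rw [chordMin_eq_lpN_chord hp h₀.le (by linarith) (lpN_chord_zero_le hp hp2 h₀ hq),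
    chord_arcLength_zero hp, lpN_zero_left (by linarith),
    abs_of_nonneg (mul_nonneg zero_le_two (rho_nonneg (Set.Ioo_subset_Icc_self hφ)).2)]

theorem chordMin_eq_mul_fst_rho_add_snd_rho (hp : 2 ≤ p) (hφ : φ ∈ Set.Ioo 0 (π / 4)) :
    chordMin p (3 * quarterLength p - 2 * arcLength p φ) =
      2 ^ (1 / p) * ((rho p φ).1 + (rho p φ).2) := by
  have hp1 : 1 < p := one_lt_two.trans_le hp
  have h₀ := arcLength_pos hp1 hφ.1
  have hq := arcLength_strictMono hp1 hφ.2
  rw [arcLength_pi_div_four hp1] at hq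
  have hρ := rho_nonneg (p := p) (φ := φ) ⟨hφ.1.le, by linarith [hφ.2, pi_pos]⟩
  rw [show 3 * quarterLength p - 2 * arcLength p φ =
      4 * quarterLength p - 2 * (quarterLength p / 2 + arcLength p φ) by ring,
    chordMin_eq_lpN_chord hp1 (by linarith) (by linarith)
      (lpN_chord_neg_quarterLength_div_two_le hp (by linarith) (by linarith)),
    chord_add_arcLength_neg hp1, lpN_diag (by linarith), abs_of_nonneg (add_nonneg hρ.1 hρ.2)]

end MinimalChord

/-! ### Arc length as an integral over the first coordinate -/

/-- The `ℓ_p` arc-length element of the first-quadrant arc of the unit circle, viewed as the graph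
of `x ↦ (1 - x ^ p) ^ (1 / p)`. -/
noncomputable def arcDensity (p x : ℝ) : ℝ :=
  (x ^ (p ^ 2 - p) * (1 - x ^ p) ^ (1 - p) + 1) ^ (1 / p)

section ArcDensity

variable {p a b s x y φ : ℝ}

theorem continuousOn_arcDensity (hp : 1 < p) : ContinuousOn (arcDensity p) (Set.Ico 0 1) := by
  have hexp : 0 ≤ p ^ 2 - p := by nlinarith
  refine ContinuousOn.rpow_const (ContinuousOn.add (.mul ?_ ?_) continuousOn_const)
    fun _ _ => .inr (one_div_pos.2 (one_pos.trans hp)).le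
  · exact (continuous_id.rpow_const fun _ => .inr hexp).continuousOn
  · refine (continuous_const.sub (continuous_id.rpow_const
      fun _ => .inr (one_pos.trans hp).le)).continuousOn.rpow_const fun x hx => .inl ?_
    exact (sub_pos.2 (rpow_lt_one hx.1 hx.2 (one_pos.trans hp))).ne'

theorem lpN_spow_eq_arcDensity_mul (hp : 1 < p) (hx : 0 ≤ x) (hy : 0 < y)
    (hxy : x ^ p + y ^ p = 1) :
    lpN p (spow (p - 1) x, spow (p - 1) y) = arcDensity p x * y ^ (p - 1) := by
  have hp0 : p ≠ 0 := (one_pos.trans hp).ne'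
  have hy' : y ^ (p - 1) = (y ^ (p ^ 2 - p)) ^ (1 / p) := by
    rw [← rpow_mul hy.le]
    congr 1
    field_simp
  have hcancel : y ^ (p * (1 - p)) * y ^ (p ^ 2 - p) = 1 := by
    rw [← rpow_add hy, show p * (1 - p) + (p ^ 2 - p) = 0 by ring, rpow_zero]
  rw [arcDensity, sub_eq_of_eq_add' hxy.symm, ← rpow_mul hy.le, hy',
    ← mul_rpow (by positivity) (by positivity), add_mul, mul_assoc, hcancel, lpN]
  simp only [abs_spow (sub_pos.2 hp).ne', abs_of_nonneg hx, abs_of_pos hy, ← rpow_mul hx,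
    ← rpow_mul hy.le, show (p - 1) * p = p ^ 2 - p by ring, mul_one, one_mul]

theorem fst_rho_rpow_add_snd_rho_rpow (hp : p ≠ 0) (hφ : φ ∈ Set.Icc 0 (π / 2)) :
    (rho p φ).1 ^ p + (rho p φ).2 ^ p = 1 := by
  have hρ := rho_nonneg (p := p) hφ
  have hmem := (mem_Cp_iff hp).1 (rho_mem_Cp hp φ)
  rwa [abs_of_nonneg hρ.1, abs_of_nonneg hρ.2] at hmem

theorem fst_rho_zero (hp : p ≠ 0) : (rho p 0).1 = 1 := by
  simp only [rho, Np, sin_zero, cos_zero, abs_zero, abs_one, zero_rpow hp, one_rpow, zero_add,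
    div_one]

theorem fst_rho_pi_div_two (p : ℝ) : (rho p (π / 2)).1 = 0 := by
  rw [rho, cos_pi_div_two, zero_div]

theorem fst_rho_pi_div_four (hp : p ≠ 0) : (rho p (π / 4)).1 = 2 ^ (-(1 / p)) := by
  have hN : Np p (π / 4) = lpN p (√2 / 2, √2 / 2) := by
    rw [Np, sin_pi_div_four, cos_pi_div_four, lpN]
  have hsqrt : 0 < √2 / 2 := by positivity
  rw [rho, hN, lpN_diag hp, cos_pi_div_four, abs_of_pos hsqrt, div_mul_cancel_right₀ hsqrt.ne',
    rpow_neg zero_le_two]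

theorem fst_rho_mem_Ico (hp : 1 < p) (hφ : φ ∈ Set.Ioc 0 (π / 2)) :
    (rho p φ).1 ∈ Set.Ico 0 1 := by
  refine ⟨(rho_nonneg (Set.Ioc_subset_Icc_self hφ)).1, ?_⟩
  rw [← fst_rho_zero (p := p) (by linarith)]
  exact fst_rho_strictAntiOn hp ⟨le_rfl, pi_pos.le⟩ ⟨hφ.1.le, by linarith [hφ.2, pi_pos]⟩ hφ.1

theorem speed_eq_neg_arcDensity_mul (hp : 1 < p) (hφ : φ ∈ Set.Ioc 0 (π / 2)) :
    speed p φ =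
      -(arcDensity p (rho p φ).1 * ((Np p φ ^ 2)⁻¹ * -spow (p - 1) (rho p φ).2)) := by
  have hy : 0 < (rho p φ).2 :=
    div_pos (sin_pos_of_pos_of_lt_pi hφ.1 (by linarith [hφ.2, pi_pos])) (Np_pos p φ)
  have hφ' := Set.Ioc_subset_Icc_self hφ
  rw [speed_eq hp, lpN_spow_eq_arcDensity_mul hp (rho_nonneg hφ').1 hy
    (fst_rho_rpow_add_snd_rho_rpow (by linarith) hφ'), spow_of_pos _ hy]
  ring

theorem integral_arcDensity (hp : 1 < p) (ha : 0 < a) (hab : a ≤ b) (hb : b ≤ π / 2) :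
    ∫ x in (rho p b).1..(rho p a).1, arcDensity p x = arcLength p b - arcLength p a := by
  have hmem : ∀ φ ∈ Set.uIcc a b, φ ∈ Set.Ioc 0 (π / 2) := fun φ hφ => by
    rw [Set.uIcc_of_le hab] at hφ
    exact ⟨ha.trans_le hφ.1, hφ.2.trans hb⟩
  rw [← integral_speed hp, integral_congr fun φ hφ => speed_eq_neg_arcDensity_mul hp (hmem φ hφ),
    intervalIntegral.integral_neg, intervalIntegral.integral_symm]
  refine congrArg Neg.neg (integral_comp_mul_deriv' (fun φ _ => hasDerivAt_fst_rho hp φ)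
    ((continuous_inv_Np_sq hp).mul ((continuous_spow (sub_pos.2 hp)).comp
      (continuous_rho hp).snd).neg).continuousOn ?_).symm
  exact (continuousOn_arcDensity hp).mono
    (Set.image_subset_iff.2 fun φ hφ => fst_rho_mem_Ico hp (hmem φ hφ))

theorem snd_rho_eq (hp : p ≠ 0) (hφ : φ ∈ Set.Icc 0 (π / 2)) :
    (rho p φ).2 = (1 - (rho p φ).1 ^ p) ^ (1 / p) := by
  rw [sub_eq_of_eq_add' (fst_rho_rpow_add_snd_rho_rpow hp hφ).symm,
    ← rpow_mul (rho_nonneg hφ).2, mul_one_div_cancel hp, rpow_one]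

theorem exists_fst_rho_eq (hp : 1 < p) (hb : 0 ≤ b) (hs : s ∈ Set.Ioo (rho p b).1 1) :
    ∃ φ ∈ Set.Ioo 0 b, (rho p φ).1 = s := by
  rw [← fst_rho_zero (p := p) (by linarith)] at hs
  exact intermediate_value_Ioo' hb (continuous_rho hp).fst.continuousOn hs

theorem chordMin_eq_two_mul (hp : 1 < p) (hp2 : p ≤ 2) (hs : s ∈ Set.Ioo 0 1) :
    chordMin p (piP p + 2 * ∫ x in 0..s, arcDensity p x) = 2 * (1 - s ^ p) ^ (1 / p) := by
  rw [← fst_rho_pi_div_two p] at hs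
  obtain ⟨φ, hφ, rfl⟩ := exists_fst_rho_eq hp (by positivity) hs
  rw [← snd_rho_eq (by linarith) (Set.Ioo_subset_Icc_self hφ), ← fst_rho_pi_div_two p,
    integral_arcDensity hp hφ.1 hφ.2.le le_rfl, ← chordMin_eq_two_mul_snd_rho hp hp2 hφ,
    piP_eq hp, quarterLength]
  congr 1
  ring

theorem chordMin_eq_two_rpow_mul (hp : 2 ≤ p) (hs : s ∈ Set.Ioo (2 ^ (-(1 / p))) 1) :
    chordMin p (piP p + 2 * ∫ x in (2 : ℝ) ^ (-(1 / p))..s, arcDensity p x) =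
      2 ^ (1 / p) * ((1 - s ^ p) ^ (1 / p) + s) := by
  have hp1 : 1 < p := one_lt_two.trans_le hp
  have hp0 : p ≠ 0 := (one_pos.trans hp1).ne'
  rw [← fst_rho_pi_div_four hp0] at hs
  obtain ⟨φ, hφ, rfl⟩ := exists_fst_rho_eq hp1 (by positivity) hs
  have hφ' : φ ≤ π / 2 := by linarith [hφ.2, pi_pos]
  rw [← snd_rho_eq hp0 ⟨hφ.1.le, hφ'⟩, ← fst_rho_pi_div_four hp0,
    integral_arcDensity hp1 hφ.1 hφ.2.le (by linarith [pi_pos]), add_comm (rho p φ).2,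
    ← chordMin_eq_mul_fst_rho_add_snd_rho hp hφ, piP_eq hp1, arcLength_pi_div_four hp1]
  congr 1
  ring

end ArcDensity

theorem two_rpow_sub_one_rpow_add_one_rpow_neg_mem_Ioo {p : ℝ} (hp : 0 < p) (r : ℝ) :
    ((2 ^ p - 1) ^ r + 1 : ℝ) ^ (-(1 / p)) ∈ Set.Ioo 0 1 := by
  have hpos : (0 : ℝ) < (2 ^ p - 1) ^ r :=
    rpow_pos_of_pos (sub_pos.2 (one_lt_rpow one_lt_two hp)) r
  exact ⟨by positivity, rpow_lt_one_of_one_lt_of_neg (lt_add_of_pos_left 1 hpos)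
    (neg_neg_of_pos (one_div_pos.2 hp))⟩

theorem rpow_add_one_rpow_neg_mem_Ioo {p r w : ℝ} (hp : 0 < p) (hr : 0 < r)
    (hw : w ∈ Set.Ioo 0 1) : (w ^ r + 1) ^ (-(1 / p)) ∈ Set.Ioo (2 ^ (-(1 / p))) 1 := by
  have hpos : 0 < w ^ r := rpow_pos_of_pos hw.1 r
  have hneg : -(1 / p) < 0 := neg_neg_of_pos (one_div_pos.2 hp)
  exact ⟨rpow_lt_rpow_of_neg (by positivity) (by linarith [rpow_lt_one hw.1.le hw.2 hr]) hneg,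
    rpow_lt_one_of_one_lt_of_neg (lt_add_of_pos_left 1 hpos) hneg⟩

end LpCircle

theorem stmt_16_general (p : ℝ) (hp : 1 < p) :
    (p ≤ 2 → ∀ s ∈ Set.Ioo (0 : ℝ) 1,
      chordMin p (piP p + 2 * ∫ z in (0 : ℝ)..s,
          (z ^ (p ^ 2 - p) * (1 - z ^ p) ^ (1 - p) + 1) ^ (1 / p)) =
        2 * (1 - s ^ p) ^ (1 / p)) ∧
    (2 ≤ p → ∀ s ∈ Set.Ioo ((2 : ℝ) ^ (-(1 / p))) 1,
      chordMin p (piP p + 2 * ∫ z in ((2 : ℝ) ^ (-(1 / p)))..s,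
          (z ^ (p ^ 2 - p) * (1 - z ^ p) ^ (1 - p) + 1) ^ (1 / p)) =
        (2 : ℝ) ^ (1 / p) * ((1 - s ^ p) ^ (1 / p) + s)) :=
  ⟨fun hp2 _ => LpCircle.chordMin_eq_two_mul hp hp2,
    fun hp2 _ => LpCircle.chordMin_eq_two_rpow_mul hp2⟩

/-- For every `p > 1`, `L_p(e_p) = γ_p`: the minimum ℓ_p chord length over all pairs
of points of `C_p` whose joining arc has ℓ_p length `e_p` equals `γ_p`, where
`e_p, γ_p` are defined piecewise for `p ∈ (1,2]` and `p ∈ (2,∞)` (the latter via the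
unique root `w_p ∈ (0,1)` of `w^p + 1 = 2(1−w)^p`). -/
theorem stmt_16 (p : ℝ) (hp : 1 < p) :
    (p ≤ 2 →
      let sp : ℝ := (((2 : ℝ) ^ p - 1) ^ (1 / (p - 1)) + 1) ^ (-(1 / p))
      let ep : ℝ := piP p
        + 2 * ∫ z in (0 : ℝ)..sp, (z ^ (p ^ 2 - p) * (1 - z ^ p) ^ (1 - p) + 1) ^ (1 / p)
      chordMin p ep = 2 * (1 - sp ^ p) ^ (1 / p)) ∧
    (2 < p → ∀ w ∈ Set.Ioo (0 : ℝ) 1, w ^ p + 1 = 2 * (1 - w) ^ p →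
      let sp : ℝ := (w ^ (p / (p - 1)) + 1) ^ (-(1 / p))
      let ep : ℝ := piP p
        + 2 * ∫ z in ((2 : ℝ) ^ (-(1 / p)))..sp,
            (z ^ (p ^ 2 - p) * (1 - z ^ p) ^ (1 - p) + 1) ^ (1 / p)
      chordMin p ep = (2 : ℝ) ^ (1 / p) * ((1 - sp ^ p) ^ (1 / p) + sp)) :=
  ⟨fun hp2 => (stmt_16_general p hp).1 hp2 _
      (LpCircle.two_rpow_sub_one_rpow_add_one_rpow_neg_mem_Ioo (one_pos.trans hp) _),
    fun hp2 _ hw _ => (stmt_16_general p hp).2 hp2.le _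
      (LpCircle.rpow_add_one_rpow_neg_mem_Ioo (one_pos.trans hp)
        (div_pos (one_pos.trans hp) (sub_pos.2 hp)) hw)⟩
end
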